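/- arXiv:1702.01192 — 4 statements merged into one kernel-verified Lean document; each statement's English description precedes it below -/
import Mathlib

section
/- Let r>0, let m_1 ≠ m_2 be integers ≥1, and let α>0, β>0 satisfy both β = -c_{m_1}·α - c_{m_1}^2 and β = -c_{m_2}·α - c_{m_2}^2, where c_m = -(π/r)^2·((2m-1)/4)^2. Then the functions e_{m_1}(s) = 2·cos(ω_{m_1}(s+r)) and e_{m_2}(s) = 2·cos(ω_{m_2}(s+r)), with ω_m = ((2m-1)π)/(4r), are linearly independent, and every four times continuously differentiable function x on [-r,r] satisfying x'''' + α·x'' + β·x = 0 on [-r,r], x'(-r) = x'''(-r) = 0 and x(r) = x''(r) = 0 is a linear combination of e_{m_1} and e_{m_2}. In particular the solution space of the linear boundary value problem is two-dimensional. -/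
open Real Set

lemma aux_ode (r w : ℝ) (hw : w ≠ 0) (y yd ydd : ℝ → ℝ)
    (h1 : ∀ s, HasDerivAt y (yd s) s) (h2 : ∀ s, HasDerivAt yd (ydd s) s)
    (h : ∀ s ∈ Icc (-r) r, ydd s = -w ^ 2 * y s) (h0 : yd (-r) = 0) :
    ∀ s ∈ Icc (-r) r, y s = y (-r) * cos (w * (s + r)) := by
  intro s hs
  have hlin : ∀ s : ℝ, HasDerivAt (fun s => w * (s + r)) w s := by
    intro s
    simpa using ((hasDerivAt_id s).add_const r).const_mul w
  have hcos : ∀ s : ℝ, HasDerivAt (fun s => cos (w * (s + r))) (-sin (w * (s + r)) * w) s :=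
    fun s => (hlin s).cos
  have hsin : ∀ s : ℝ, HasDerivAt (fun s => sin (w * (s + r))) (cos (w * (s + r)) * w) s :=
    fun s => (hlin s).sin
  have hu := fun s => ((h1 s).const_mul w |>.mul (hcos s)).sub ((h2 s).mul (hsin s))
  have hv := fun s => ((h1 s).const_mul w |>.mul (hsin s)).add ((h2 s).mul (hcos s))
  have cu := constant_of_has_deriv_right_zero (a := -r) (b := r)
    (fun s _ => (hu s).continuousAt.continuousWithinAt)
    (fun s hs => by
      convert (hu s).hasDerivWithinAt using 1
      rw [h s ⟨hs.1, hs.2.le⟩]; ring) s hs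
  have cv := constant_of_has_deriv_right_zero (a := -r) (b := r)
    (fun s _ => (hv s).continuousAt.continuousWithinAt)
    (fun s hs => by
      convert (hv s).hasDerivWithinAt using 1
      rw [h s ⟨hs.1, hs.2.le⟩]; ring) s hs
  simp [h0] at cu cv
  have hp := sin_sq_add_cos_sq (w * (s + r))
  apply mul_left_cancel₀ hw
  linear_combination cos (w * (s + r)) * cu + sin (w * (s + r)) * cv - w * y s * hp

lemma aux_indep (r : ℝ) (hr : 0 < r) (w₁ w₂ : ℝ) (h1 : 0 < w₁) (h12 : w₁ < w₂)
    (hw : π / (4 * r) ≤ w₂) (a b : ℝ)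
    (h : ∀ s ∈ Icc (-r) r, a * (2 * cos (w₁ * (s + r))) + b * (2 * cos (w₂ * (s + r))) = 0) :
    a = 0 ∧ b = 0 := by
  have h2 : 0 < w₂ := h1.trans h12
  have hpi := pi_pos
  have A := h (-r) ⟨le_rfl, by linarith⟩
  have ht : π / (2 * w₂) ≤ 2 * r := by
    rw [div_le_iff₀ (by positivity)] at hw ⊢
    linarith
  have htp : 0 < π / (2 * w₂) := by positivity
  have B := h (π / (2 * w₂) - r) ⟨by linarith, by linarith⟩
  have e2 : w₂ * (π / (2 * w₂) - r + r) = π / 2 := by field_simp; ring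
  have hc : 0 < cos (w₁ * (π / (2 * w₂) - r + r)) := by
    apply cos_pos_of_mem_Ioo
    rw [sub_add_cancel] at e2 ⊢
    constructor
    · have : 0 < w₁ * (π / (2 * w₂)) := by positivity
      linarith
    · rw [← e2]; gcongr
  rw [e2, cos_pi_div_two] at B
  have ha : a = 0 := by
    have : a * cos (w₁ * (π / (2 * w₂) - r + r)) = 0 := by linarith
    exact (mul_eq_zero.1 this).resolve_right hc.ne'
  subst ha
  simp at A
  exact ⟨rfl, A⟩

/-- At an intersection point of two distinct rays `l_{m₁}`, `l_{m₂}`, the two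
functions `e_{m₁}`, `e_{m₂}` are linearly independent and every solution of the linear boundary
value problem is a linear combination of them. -/
theorem stmt_3 (r : ℝ) (hr : 0 < r)
    (c : ℕ → ℝ)
    (hc : ∀ k : ℕ, c k = -(π / r) ^ 2 * ((2 * (k : ℝ) - 1) / 4) ^ 2)
    (m₁ m₂ : ℕ) (hm₁ : 1 ≤ m₁) (hm₂ : 1 ≤ m₂) (hne : m₁ ≠ m₂)
    (α β : ℝ) (hα : 0 < α) (hβ : 0 < β)
    (hray₁ : β = -(c m₁) * α - (c m₁) ^ 2)
    (hray₂ : β = -(c m₂) * α - (c m₂) ^ 2)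
    (ω₁ ω₂ : ℝ)
    (hω₁ : ω₁ = ((2 * (m₁ : ℝ) - 1) * π) / (4 * r))
    (hω₂ : ω₂ = ((2 * (m₂ : ℝ) - 1) * π) / (4 * r))
    (e₁ e₂ : ℝ → ℝ)
    (he₁ : e₁ = fun s => 2 * Real.cos (ω₁ * (s + r)))
    (he₂ : e₂ = fun s => 2 * Real.cos (ω₂ * (s + r))) :
    (∀ a b : ℝ, (∀ s ∈ Icc (-r) r, a * e₁ s + b * e₂ s = 0) → a = 0 ∧ b = 0) ∧
    (∀ x : ℝ → ℝ, ContDiff ℝ 4 x →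
      (∀ s ∈ Icc (-r) r,
        iteratedDeriv 4 x s + α * iteratedDeriv 2 x s + β * x s = 0) →
      iteratedDeriv 1 x (-r) = 0 → iteratedDeriv 3 x (-r) = 0 →
      x r = 0 → iteratedDeriv 2 x r = 0 →
      ∃ a b : ℝ, ∀ s ∈ Icc (-r) r, x s = a * e₁ s + b * e₂ s) := by
  have hpi := pi_pos
  have q1 : (1 : ℝ) ≤ m₁ := by exact_mod_cast hm₁
  have q2 : (1 : ℝ) ≤ m₂ := by exact_mod_cast hm₂
  have l1 : π / (4 * r) ≤ ω₁ := by
    rw [hω₁]; gcongr; nlinarith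
  have l2 : π / (4 * r) ≤ ω₂ := by
    rw [hω₂]; gcongr; nlinarith
  have hp : 0 < π / (4 * r) := by positivity
  have p1 := hp.trans_le l1
  have p2 := hp.trans_le l2
  have hωne : ω₁ ≠ ω₂ := by
    intro hh
    rw [hω₁, hω₂] at hh
    field_simp at hh
    apply hne
    have : (m₁ : ℝ) = m₂ := by linarith
    exact_mod_cast this
  have c1 : c m₁ = -ω₁ ^ 2 := by rw [hc, hω₁]; field_simp
  have c2 : c m₂ = -ω₂ ^ 2 := by rw [hc, hω₂]; field_simp
  rw [c1] at hray₁
  rw [c2] at hray₂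
  have hd : ω₁ ^ 2 - ω₂ ^ 2 ≠ 0 := by
    have : ω₁ ^ 2 - ω₂ ^ 2 = (ω₁ - ω₂) * (ω₁ + ω₂) := by ring
    rw [this]
    exact mul_ne_zero (sub_ne_zero.2 hωne) (by positivity)
  have hαe : α = ω₁ ^ 2 + ω₂ ^ 2 := by
    apply mul_left_cancel₀ hd
    linear_combination hray₂ - hray₁
  have hβe : β = ω₁ ^ 2 * ω₂ ^ 2 := by rw [hray₁, hαe]; ring
  subst he₁ he₂
  refine ⟨?_, ?_⟩
  · intro a b h
    rcases lt_or_gt_of_ne hωne with hlt | hlt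
    · exact aux_indep r hr ω₁ ω₂ p1 hlt l2 a b h
    · exact (aux_indep r hr ω₂ ω₁ p2 hlt l1 b a
        (fun s hs => by have := h s hs; simp only at this; linarith)).symm
  · intro x hx hode b1 b3 _ _
    have hD : ∀ k : ℕ, k < 4 → ∀ s,
        HasDerivAt (iteratedDeriv k x) (iteratedDeriv (k + 1) x s) s := by
      intro k hk s
      rw [iteratedDeriv_succ]
      exact (hx.differentiable_iteratedDeriv k (by exact_mod_cast hk) s).hasDerivAt
    have d0 := hD 0 (by norm_num)
    rw [iteratedDeriv_zero] at d0
    have d1 := hD 1 (by norm_num)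
    have d2 := hD 2 (by norm_num)
    have d3 := hD 3 (by norm_num)
    norm_num only at d0 d1 d2 d3
    have Y := aux_ode r ω₁ p1.ne' _ _ _
      (fun s => (d2 s).add ((d0 s).const_mul (ω₂ ^ 2)))
      (fun s => (d3 s).add ((d1 s).const_mul (ω₂ ^ 2)))
      (fun s hs => by
        have := hode s hs
        simp only [Pi.add_apply]
        rw [hαe, hβe] at this
        linear_combination this) (by rw [b1, b3]; ring)
    have Z := aux_ode r ω₂ p2.ne' _ _ _
      (fun s => (d2 s).add ((d0 s).const_mul (ω₁ ^ 2)))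
      (fun s => (d3 s).add ((d1 s).const_mul (ω₁ ^ 2)))
      (fun s hs => by
        have := hode s hs
        simp only [Pi.add_apply]
        rw [hαe, hβe] at this
        linear_combination this) (by rw [b1, b3]; ring)
    simp only [Pi.add_apply] at Y Z
    refine ⟨-(iteratedDeriv 2 x (-r) + ω₂ ^ 2 * x (-r)) / (2 * (ω₁ ^ 2 - ω₂ ^ 2)),
      (iteratedDeriv 2 x (-r) + ω₁ ^ 2 * x (-r)) / (2 * (ω₁ ^ 2 - ω₂ ^ 2)), fun s hs => ?_⟩
    have y := Y s hs
    have z := Z s hs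
    simp only
    apply mul_left_cancel₀ hd
    field_simp
    linear_combination z - y
end

section
/- Let r>0 and let α_0>0, β_0>0, γ_0>0 be such that β_0 ≠ -c_m·α_0 - c_m^2 for every integer m≥1, where c_m = -(π/r)^2·((2m-1)/4)^2. Then there exists ε>0 such that: whenever α, β, γ are positive reals with |α-α_0| < ε, |β-β_0| < ε, |γ-γ_0| < ε, and x is a four times continuously differentiable function on [-r,r] satisfying the boundary conditions x'(-r) = x'''(-r) = 0, x(r) = x''(r) = 0, the nonlinear equation x'''' + α·x'' + β·x - γ·x^3 - 3·(x'')^3 - 12·x'·x''·x''' - 3·(x')^2·(x'''' - (α/2)·x'') = 0 on [-r,r], and the smallness condition sup_{s∈[-r,r]}|x^{(k)}(s)| < ε for k = 0,1,2,3,4, it follows that x ≡ 0. (Necessity part of the main theorem: no bifurcation occurs at parameters where the linearization has trivial kernel.) -/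
open Real Set

/-- A priori estimate for the second order mixed boundary value problem. -/
lemma second_order_est (r : ℝ) (hr : 0 < r) (ω : ℂ) (hω : ω ≠ 0)
    (hcos : Complex.cos (2 * r * ω) ≠ 0) :
    ∃ K > 0, ∀ u u1 u2 : ℝ → ℂ, (∀ t, HasDerivAt u (u1 t) t) → (∀ t, HasDerivAt u1 (u2 t) t) →
      u1 (-r) = 0 → u r = 0 → ∀ F : ℝ, (∀ t ∈ Icc (-r) r, ‖u2 t + ω ^ 2 * u t‖ ≤ F) →
      ∀ s ∈ Icc (-r) r, ‖u s‖ ≤ K * F ∧ ‖u1 s‖ ≤ K * F ∧ ‖u2 s‖ ≤ K * F := by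
  set v : ℝ → ℂ := fun t => Complex.cos (ω * (t + r)) with hv
  set v' : ℝ → ℂ := fun t => -(ω * Complex.sin (ω * (t + r))) with hv'
  set w : ℝ → ℂ := fun t => Complex.sin (ω * (t - r)) with hw
  set w' : ℝ → ℂ := fun t => ω * Complex.cos (ω * (t - r)) with hw'
  have hlin : ∀ (e : ℂ) (t : ℝ), HasDerivAt (fun t : ℝ => ω * ((t : ℂ) + e)) ω t := by
    intro e t
    have h := ((Complex.ofRealCLM.hasDerivAt (x := t)).add_const e).const_mul ω
    simpa using h
  have hlin2 : ∀ (e : ℂ) (t : ℝ), HasDerivAt (fun t : ℝ => ω * ((t : ℂ) - e)) ω t := by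
    intro e t
    simpa [sub_eq_add_neg] using hlin (-e) t
  have dv : ∀ t, HasDerivAt v (v' t) t := by
    intro t
    have h := (Complex.hasDerivAt_cos (ω * (t + r))).comp t (hlin r t)
    refine h.congr_deriv ?_
    simp only [hv']; ring
  have dv' : ∀ t, HasDerivAt v' (-(ω ^ 2 * v t)) t := by
    intro t
    have h := (((Complex.hasDerivAt_sin (ω * (t + r))).comp t (hlin r t)).const_mul ω).neg
    refine h.congr_deriv ?_
    simp only [hv]; ring
  have dw : ∀ t, HasDerivAt w (w' t) t := by
    intro t
    have h := (Complex.hasDerivAt_sin (ω * (t - r))).comp t (hlin2 r t)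
    refine h.congr_deriv ?_
    simp only [hw']; ring
  have dw' : ∀ t, HasDerivAt w' (-(ω ^ 2 * w t)) t := by
    intro t
    have h := (((Complex.hasDerivAt_cos (ω * (t - r))).comp t (hlin2 r t)).const_mul ω)
    refine h.congr_deriv ?_
    simp only [hw]; ring
  have cont : ∀ {g g' : ℝ → ℂ}, (∀ t, HasDerivAt g (g' t) t) → Continuous g := fun h =>
    continuous_iff_continuousAt.2 fun t => (h t).continuousAt
  have bd : ∀ g : ℝ → ℂ, Continuous g → ∃ B, ∀ t ∈ Icc (-r) r, ‖g t‖ ≤ B := fun g hg =>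
    isCompact_Icc.exists_bound_of_continuousOn hg.continuousOn
  obtain ⟨B1, hB1⟩ := bd v (cont dv)
  obtain ⟨B2, hB2⟩ := bd v' (cont dv')
  obtain ⟨B3, hB3⟩ := bd w (cont dw)
  obtain ⟨B4, hB4⟩ := bd w' (cont dw')
  obtain ⟨B, hB0, hB⟩ : ∃ B, 0 ≤ B ∧ B1 ≤ B ∧ B2 ≤ B ∧ B3 ≤ B ∧ B4 ≤ B :=
    ⟨|B1| + |B2| + |B3| + |B4|, by positivity, by
      refine ⟨?_, ?_, ?_, ?_⟩ <;>
      linarith [le_abs_self B1, le_abs_self B2, le_abs_self B3, le_abs_self B4,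
        abs_nonneg B1, abs_nonneg B2, abs_nonneg B3, abs_nonneg B4]⟩
  set W : ℂ := ω * Complex.cos (2 * r * ω) with hW
  have hW0 : W ≠ 0 := mul_ne_zero hω hcos
  have hWr : ∀ t, v t * w' t - v' t * w t = W := by
    intro t
    have e : (2 * r * ω : ℂ) = ω * (t + r) - ω * (t - r) := by ring
    rw [hW, e, Complex.cos_sub]
    simp only [hv, hv', hw, hw']
    ring
  have hWp : 0 < ‖W‖ := norm_pos_iff.2 hW0
  set K0 : ℝ := (4 * B ^ 2 * r) / ‖W‖ with hK0
  have hK0n : 0 ≤ K0 := by positivity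
  refine ⟨1 + K0 + ‖ω‖ ^ 2 * K0, by positivity, ?_⟩
  intro u u1 u2 du du1 hbl hbr F hF s hs
  have hF0 : 0 ≤ F := (norm_nonneg _).trans (hF s hs)
  have hml : -r ∈ Icc (-r) r := ⟨le_rfl, by linarith⟩
  have hmr : r ∈ Icc (-r) r := ⟨by linarith, le_rfl⟩
  -- bracket estimate
  have key : ∀ g g' : ℝ → ℂ, (∀ t, HasDerivAt g (g' t) t) →
      (∀ t, HasDerivAt g' (-(ω ^ 2 * g t)) t) → (∀ t ∈ Icc (-r) r, ‖g t‖ ≤ B) →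
      ∀ p ∈ Icc (-r) r, u1 p * g p - u p * g' p = 0 →
      ‖u1 s * g s - u s * g' s‖ ≤ F * B * (2 * r) := by
    intro g g' dg dg' hg p hp h0
    have hd : ∀ t ∈ Icc (-r) r, HasDerivWithinAt (fun t => u1 t * g t - u t * g' t)
        ((u2 t + ω ^ 2 * u t) * g t) (Icc (-r) r) t := by
      intro t _
      have h := ((du1 t).mul (dg t)).sub ((du t).mul (dg' t))
      refine (h.congr_deriv ?_).hasDerivWithinAt
      ring
    have hb : ∀ t ∈ Icc (-r) r, ‖(u2 t + ω ^ 2 * u t) * g t‖ ≤ F * B := by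
      intro t ht
      rw [norm_mul]
      exact mul_le_mul (hF t ht) (hg t ht) (norm_nonneg _) hF0
    have h := (convex_Icc (-r) r).norm_image_sub_le_of_norm_hasDerivWithin_le hd hb hp hs
    simp only [h0, sub_zero] at h
    refine h.trans ?_
    have : ‖s - p‖ ≤ 2 * r := by
      rw [Real.norm_eq_abs, abs_le]
      constructor <;> linarith [hs.1, hs.2, hp.1, hp.2]
    gcongr
  have hP := key v v' dv dv' (fun t ht => (hB1 t ht).trans hB.1) (-r) hml (by
    simp [hbl, hv'])
  have hQ := key w w' dw dw' (fun t ht => (hB3 t ht).trans hB.2.2.1) r hmr (by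
    simp [hbr, hw])
  have fin : ∀ (z y q p1 p2 : ℂ), ‖p1‖ ≤ F * B * (2 * r) → ‖p2‖ ≤ F * B * (2 * r) →
      ‖z‖ ≤ B → ‖y‖ ≤ B → q * W = z * p1 - y * p2 → ‖q‖ ≤ K0 * F := by
    intro z y q p1 p2 h1 h2 hz hy e
    have : ‖q‖ * ‖W‖ ≤ 4 * B ^ 2 * r * F := by
      rw [← norm_mul, e]
      refine (norm_sub_le _ _).trans ?_
      rw [norm_mul, norm_mul]
      have a1 := mul_le_mul hz h1 (norm_nonneg _) hB0
      have a2 := mul_le_mul hy h2 (norm_nonneg _) hB0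
      nlinarith
    rw [hK0, div_mul_eq_mul_div, le_div_iff₀ hWp]
    exact this
  have h0 : ‖u s‖ ≤ K0 * F := fin (w s) (v s) _ _ _ hP hQ ((hB3 s hs).trans hB.2.2.1)
    ((hB1 s hs).trans hB.1) (by rw [← hWr s]; ring)
  have h1 : ‖u1 s‖ ≤ K0 * F := fin (w' s) (v' s) _ _ _ hP hQ ((hB4 s hs).trans hB.2.2.2)
    ((hB2 s hs).trans hB.2.1) (by rw [← hWr s]; ring)
  have h2 : ‖u2 s‖ ≤ F + ‖ω‖ ^ 2 * (K0 * F) := by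
    have e : u2 s = (u2 s + ω ^ 2 * u s) - ω ^ 2 * u s := by ring
    rw [e]
    refine (norm_sub_le _ _).trans ?_
    rw [norm_mul, norm_pow]
    have := hF s hs
    gcongr
  have n1 : 0 ≤ K0 * F := by positivity
  have n2 : 0 ≤ ‖ω‖ ^ 2 * (K0 * F) := by positivity
  refine ⟨?_, ?_, ?_⟩ <;> nlinarith

/-- A priori estimate for the fourth order linear problem. -/
lemma fourth_order_est (r : ℝ) (hr : 0 < r) (α β : ℝ) (hβ : 0 < β)
    (hray : ∀ m : ℕ, 1 ≤ m → β ≠ (π / r) ^ 2 * ((2 * (m : ℝ) - 1) / 4) ^ 2 * α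
      - ((π / r) ^ 2 * ((2 * (m : ℝ) - 1) / 4) ^ 2) ^ 2) :
    ∃ C > 0, ∀ x0 x1 x2 x3 x4 : ℝ → ℝ, (∀ t, HasDerivAt x0 (x1 t) t) →
      (∀ t, HasDerivAt x1 (x2 t) t) → (∀ t, HasDerivAt x2 (x3 t) t) →
      (∀ t, HasDerivAt x3 (x4 t) t) →
      x1 (-r) = 0 → x3 (-r) = 0 → x0 r = 0 → x2 r = 0 →
      ∀ F : ℝ, (∀ t ∈ Icc (-r) r, |x4 t + α * x2 t + β * x0 t| ≤ F) →
      ∀ s ∈ Icc (-r) r, |x0 s| ≤ C * F ∧ |x1 s| ≤ C * F ∧ |x2 s| ≤ C * F ∧ |x3 s| ≤ C * F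
        ∧ |x4 s| ≤ C * F := by
  have root : ∀ a : ℂ, a ^ 2 - α * a + β = 0 → ∃ ω : ℂ, ω ^ 2 = a ∧ ω ≠ 0 ∧
      Complex.cos (2 * r * ω) ≠ 0 := by
    intro a ha
    obtain ⟨ω, hω⟩ := IsAlgClosed.exists_pow_nat_eq a (n := 2) (by norm_num)
    refine ⟨ω, hω, ?_, ?_⟩
    · rintro rfl
      have : a = 0 := by rw [← hω]; simp
      rw [this] at ha
      have : (β : ℂ) = 0 := by simpa using ha
      exact hβ.ne' (by exact_mod_cast this)
    · intro hc
      obtain ⟨k, hk⟩ := Complex.cos_eq_zero_iff.1 hc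
      obtain ⟨m, hm1, hm⟩ : ∃ m : ℕ, 1 ≤ m ∧ (2 * (m : ℝ) - 1) ^ 2 = (2 * (k : ℝ) + 1) ^ 2 := by
        rcases le_or_gt 0 k with h | h
        · refine ⟨(k + 1).toNat, by omega, ?_⟩
          have : (((k + 1).toNat : ℤ) : ℝ) = ((k + 1 : ℤ) : ℝ) := by
            rw [Int.toNat_of_nonneg (by omega)]
          have h2 : (((k + 1).toNat : ℕ) : ℝ) = k + 1 := by
            push_cast at this; exact_mod_cast this
          rw [h2]; ring
        · refine ⟨(-k).toNat, by omega, ?_⟩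
          have : (((-k).toNat : ℤ) : ℝ) = ((-k : ℤ) : ℝ) := by
            rw [Int.toNat_of_nonneg (by omega)]
          have h2 : (((-k).toNat : ℕ) : ℝ) = -k := by
            push_cast at this; exact_mod_cast this
          rw [h2]; ring
      apply hray m hm1
      set A : ℝ := (π / r) ^ 2 * ((2 * (m : ℝ) - 1) / 4) ^ 2 with hA
      have hA2 : A = ((2 * (k : ℝ) + 1) * π / (4 * r)) ^ 2 := by
        rw [hA, div_pow (2 * (m : ℝ) - 1), hm]
        field_simp
        try ring
      have hrC : (r : ℂ) ≠ 0 := by exact_mod_cast hr.ne'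
      have hω' : ω = (2 * (k : ℂ) + 1) * π / (4 * r) := by
        field_simp
        linear_combination 2 * hk
      have haA : a = (A : ℂ) := by
        rw [← hω, hω', hA2]; push_cast; rfl
      rw [haA] at ha
      have ha' : A ^ 2 - α * A + β = 0 := by exact_mod_cast ha
      linarith
  obtain ⟨d, hd⟩ := IsAlgClosed.exists_pow_nat_eq ((α : ℂ) ^ 2 - 4 * β) (n := 2) (by norm_num)
  obtain ⟨ω, hωa, hω0, hωc⟩ := root ((α + d) / 2) (by linear_combination hd / 4)
  obtain ⟨η, hηa, hη0, hηc⟩ := root ((α - d) / 2) (by linear_combination hd / 4)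
  obtain ⟨K, hK, hKe⟩ := second_order_est r hr ω hω0 hωc
  obtain ⟨L, hL, hLe⟩ := second_order_est r hr η hη0 hηc
  have hsum : ω ^ 2 + η ^ 2 = α := by rw [hωa, hηa]; ring
  have hprod : ω ^ 2 * η ^ 2 = β := by rw [hωa, hηa]; linear_combination -hd / 4
  refine ⟨L * K + K + ‖η‖ ^ 2 * (L * K), by positivity, ?_⟩
  intro x0 x1 x2 x3 x4 d0 d1 d2 d3 b1 b3 b0 b2 F hF s hs
  have hF0 : 0 ≤ F := (abs_nonneg _).trans (hF s hs)
  have q0 := fun t => (d0 t).ofReal_comp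
  have q1 := fun t => (d1 t).ofReal_comp
  have q2 := fun t => (d2 t).ofReal_comp
  have q3 := fun t => (d3 t).ofReal_comp
  have E1 := hKe (fun t => (x2 t : ℂ) + η ^ 2 * x0 t) (fun t => (x3 t : ℂ) + η ^ 2 * x1 t)
    (fun t => (x4 t : ℂ) + η ^ 2 * x2 t) (fun t => (q2 t).add ((q0 t).const_mul _))
    (fun t => (q3 t).add ((q1 t).const_mul _)) (by simp [b1, b3]) (by simp [b0, b2]) F (by
      intro t ht
      have e : (x4 t : ℂ) + η ^ 2 * x2 t + ω ^ 2 * ((x2 t : ℂ) + η ^ 2 * x0 t)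
          = ((x4 t + α * x2 t + β * x0 t : ℝ) : ℂ) := by
        push_cast
        rw [← hsum, ← hprod]; ring
      simp only [e, Complex.norm_real, Real.norm_eq_abs]
      exact hF t ht)
  have E2 := hLe (fun t => (x0 t : ℂ)) (fun t => (x1 t : ℂ)) (fun t => (x2 t : ℂ)) q0 q1
    (by simp [b1]) (by simp [b0]) (K * F) (fun t ht => (E1 t ht).1) s hs
  obtain ⟨-, e3, e4⟩ := E1 s hs
  obtain ⟨f0, f1, f2⟩ := E2
  have tri : ∀ p q : ℝ, ‖(p : ℂ) + η ^ 2 * q‖ ≤ K * F → ‖(q : ℂ)‖ ≤ L * (K * F) →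
      |p| ≤ K * F + ‖η‖ ^ 2 * (L * (K * F)) := by
    intro p q h1 h2
    rw [← Real.norm_eq_abs, ← Complex.norm_real]
    have e : (p : ℂ) = ((p : ℂ) + η ^ 2 * q) - η ^ 2 * q := by ring
    rw [e]
    refine (norm_sub_le _ _).trans ?_
    rw [norm_mul, norm_pow]
    gcongr
  have g3 := tri _ _ e3 f1
  have g4 := tri _ _ e4 f2
  simp only [Complex.norm_real, Real.norm_eq_abs] at f0 f1 f2
  have n1 : 0 ≤ K * F := by positivity
  have n3 : 0 ≤ L * (K * F) := by positivity
  have n2 : 0 ≤ ‖η‖ ^ 2 * (L * (K * F)) := by positivity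
  refine ⟨?_, ?_, ?_, ?_, ?_⟩ <;> nlinarith

/-- Pointwise bound of the nonlinear remainder. -/
lemma remainder_bound (α₀ β₀ γ₀ α β γ ε M y0 y1 y2 y3 y4 : ℝ) (hα₀ : 0 < α₀)
    (hα : 0 < α) (hγ : 0 < γ) (hγ₀ : 0 < γ₀) (hε0 : 0 < ε) (hε1 : ε ≤ 1) (hM0 : 0 ≤ M) (hM : M ≤ ε)
    (dα : |α - α₀| < ε) (dβ : |β - β₀| < ε) (dγ : |γ - γ₀| < ε)
    (h0 : |y0| ≤ M) (h1 : |y1| ≤ M) (h2 : |y2| ≤ M) (h3 : |y3| ≤ M) (h4 : |y4| ≤ M)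
    (he : y4 + α * y2 + β * y0 - γ * y0 ^ 3 - 3 * y2 ^ 3 - 12 * y1 * y2 * y3
      - 3 * y1 ^ 2 * (y4 - (α / 2) * y2) = 0) :
    |y4 + α₀ * y2 + β₀ * y0| ≤ (γ₀ + 3 * α₀ + 30) * ε * M := by
  have e : y4 + α₀ * y2 + β₀ * y0 = -((α - α₀) * y2) + -((β - β₀) * y0) + γ * (y0 * y0 * y0)
      + 3 * (y2 * y2 * y2) + 12 * (y1 * y2 * y3) + 3 * (y1 * y1 * y4)
      + -(3 / 2 * α * (y1 * y1 * y2)) := by linear_combination he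
  have cub : ∀ p q z : ℝ, |p| ≤ M → |q| ≤ M → |z| ≤ M → |p * q * z| ≤ ε * M := by
    intro p q z hp hq hz
    rw [abs_mul, abs_mul]
    calc |p| * |q| * |z| ≤ M * M * M := by gcongr
      _ ≤ ε * 1 * M := by gcongr; exact hM.trans hε1
      _ = ε * M := by ring
  have hεM : 0 ≤ ε * M := by positivity
  have hγ' : γ ≤ γ₀ + 1 := by linarith [(abs_lt.1 dγ).2]
  have hα' : α ≤ α₀ + 1 := by linarith [(abs_lt.1 dα).2]
  have t1 : |-((α - α₀) * y2)| ≤ ε * M := by rw [abs_neg, abs_mul]; gcongr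
  have t2 : |-((β - β₀) * y0)| ≤ ε * M := by rw [abs_neg, abs_mul]; gcongr
  have t3 : |γ * (y0 * y0 * y0)| ≤ (γ₀ + 1) * (ε * M) := by
    rw [abs_mul, abs_of_pos hγ]
    have := cub _ _ _ h0 h0 h0
    gcongr
  have t4 : |3 * (y2 * y2 * y2)| ≤ 3 * (ε * M) := by
    rw [abs_mul, abs_of_pos (by norm_num : (0:ℝ) < 3)]
    have := cub _ _ _ h2 h2 h2
    gcongr
  have t5 : |12 * (y1 * y2 * y3)| ≤ 12 * (ε * M) := by
    rw [abs_mul, abs_of_pos (by norm_num : (0:ℝ) < 12)]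
    have := cub _ _ _ h1 h2 h3
    gcongr
  have t6 : |3 * (y1 * y1 * y4)| ≤ 3 * (ε * M) := by
    rw [abs_mul, abs_of_pos (by norm_num : (0:ℝ) < 3)]
    have := cub _ _ _ h1 h1 h4
    gcongr
  have t7 : |-(3 / 2 * α * (y1 * y1 * y2))| ≤ 3 / 2 * (α₀ + 1) * (ε * M) := by
    rw [abs_neg, abs_mul, abs_of_pos (by positivity : (0:ℝ) < 3 / 2 * α)]
    have := cub _ _ _ h1 h1 h2
    gcongr
  have hαM : 0 ≤ α₀ * (ε * M) := by positivity
  rw [e, abs_le]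
  rw [abs_le] at t1 t2 t3 t4 t5 t6 t7
  obtain ⟨l1, r1⟩ := t1
  obtain ⟨l2, r2⟩ := t2
  obtain ⟨l3, r3⟩ := t3
  obtain ⟨l4, r4⟩ := t4
  obtain ⟨l5, r5⟩ := t5
  obtain ⟨l6, r6⟩ := t6
  obtain ⟨l7, r7⟩ := t7
  have eN : (γ₀ + 3 * α₀ + 30) * ε * M
    = γ₀ * (ε * M) + 3 * (α₀ * (ε * M)) + 30 * (ε * M) := by ring
  rw [eN]
  constructor <;> linarith

/-- No bifurcation at parameter points where the linearization has trivial
kernel: small solutions of the nonlinear equation for nearby parameters are trivial. -/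
theorem stmt_13 (r : ℝ) (hr : 0 < r)
    (c : ℕ → ℝ)
    (hc : ∀ m : ℕ, c m = -(π / r) ^ 2 * ((2 * (m : ℝ) - 1) / 4) ^ 2)
    (α₀ β₀ γ₀ : ℝ) (hα₀ : 0 < α₀) (hβ₀ : 0 < β₀) (hγ₀ : 0 < γ₀)
    (hray : ∀ m : ℕ, 1 ≤ m → β₀ ≠ -(c m) * α₀ - (c m) ^ 2) :
    ∃ ε > 0, ∀ α β γ : ℝ, 0 < α → 0 < β → 0 < γ →
      |α - α₀| < ε → |β - β₀| < ε → |γ - γ₀| < ε →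
      ∀ x : ℝ → ℝ, ContDiff ℝ 4 x →
        iteratedDeriv 1 x (-r) = 0 → iteratedDeriv 3 x (-r) = 0 →
        x r = 0 → iteratedDeriv 2 x r = 0 →
        (∀ s ∈ Icc (-r) r,
          iteratedDeriv 4 x s + α * iteratedDeriv 2 x s + β * x s
            - γ * (x s) ^ 3 - 3 * (iteratedDeriv 2 x s) ^ 3
            - 12 * iteratedDeriv 1 x s * iteratedDeriv 2 x s * iteratedDeriv 3 x s
            - 3 * (iteratedDeriv 1 x s) ^ 2 *
                (iteratedDeriv 4 x s - (α / 2) * iteratedDeriv 2 x s) = 0) →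
        (∀ k : ℕ, k ≤ 4 → ∀ s ∈ Icc (-r) r, |iteratedDeriv k x s| < ε) →
        ∀ s ∈ Icc (-r) r, x s = 0 := by
  obtain ⟨C, hC, hCe⟩ := fourth_order_est r hr α₀ β₀ hβ₀ (by
    intro m hm h
    apply hray m hm
    rw [hc m]
    linear_combination h)
  set N : ℝ := γ₀ + 3 * α₀ + 30 with hN
  have hNp : 0 < N := by positivity
  refine ⟨min 1 (1 / (2 * C * N)), by positivity, ?_⟩
  set ε : ℝ := min 1 (1 / (2 * C * N)) with hε
  have hε0 : 0 < ε := by positivity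
  have hε1 : ε ≤ 1 := min_le_left _ _
  have hεC : C * (N * ε) ≤ 1 / 2 := by
    have h : ε ≤ 1 / (2 * C * N) := min_le_right _ _
    rw [le_div_iff₀ (by positivity)] at h
    linarith
  intro α β γ hα hβ hγ dα dβ dγ x hx b1 b3 b0 b2 heq hsm
  have D : ∀ k : ℕ, k < 4 → ∀ t, HasDerivAt (iteratedDeriv k x) (iteratedDeriv (k + 1) x t) t := by
    intro k hk t
    rw [iteratedDeriv_succ]
    exact ((hx.differentiable_iteratedDeriv k (by exact_mod_cast hk)) t).hasDerivAt
  have D0 := D 0 (by norm_num)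
  simp only [iteratedDeriv_zero, zero_add] at D0
  -- the contraction step
  have step : ∀ M : ℝ, M ≤ ε → (∀ k : ℕ, k ≤ 4 → ∀ s ∈ Icc (-r) r, |iteratedDeriv k x s| ≤ M) →
      ∀ k : ℕ, k ≤ 4 → ∀ s ∈ Icc (-r) r, |iteratedDeriv k x s| ≤ M / 2 := by
    intro M hM h
    have hM0 : 0 ≤ M := (abs_nonneg _).trans (h 0 (by norm_num) r ⟨by linarith, le_rfl⟩)
    have main := hCe x (iteratedDeriv 1 x) (iteratedDeriv 2 x) (iteratedDeriv 3 x)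
      (iteratedDeriv 4 x) D0 (D 1 (by norm_num)) (D 2 (by norm_num)) (D 3 (by norm_num))
      b1 b3 b0 b2 (N * ε * M) (by
        intro t ht
        have h0 := h 0 (by norm_num) t ht
        have h1 := h 1 (by norm_num) t ht
        have h2 := h 2 (by norm_num) t ht
        have h3 := h 3 (by norm_num) t ht
        have h4 := h 4 (by norm_num) t ht
        rw [iteratedDeriv_zero] at h0
        exact remainder_bound α₀ β₀ γ₀ α β γ ε M _ _ _ _ _ hα₀ hα hγ hγ₀ hε0 hε1 hM0 hM dα dβ dγ
          h0 h1 h2 h3 h4 (heq t ht))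
    have hfin : C * (N * ε * M) ≤ M / 2 := by
      have := mul_le_mul_of_nonneg_right hεC hM0
      linarith
    intro k hk s hs
    obtain ⟨m0, m1, m2, m3, m4⟩ := main s hs
    interval_cases k
    · rw [iteratedDeriv_zero]; exact m0.trans hfin
    · exact m1.trans hfin
    · exact m2.trans hfin
    · exact m3.trans hfin
    · exact m4.trans hfin
  have iter : ∀ n : ℕ, ∀ k : ℕ, k ≤ 4 → ∀ s ∈ Icc (-r) r,
      |iteratedDeriv k x s| ≤ ε * (1 / 2) ^ n := by
    intro n
    induction n with
    | zero => intro k hk s hs; simpa using (hsm k hk s hs).le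
    | succ n ih =>
      intro k hk s hs
      have h := step _ (by
        have : ((1:ℝ) / 2) ^ n ≤ 1 := pow_le_one₀ (by norm_num) (by norm_num)
        nlinarith) ih k hk s hs
      rw [pow_succ]; linarith
  intro s hs
  have lim : Filter.Tendsto (fun n : ℕ => ε * ((1:ℝ) / 2) ^ n) Filter.atTop (nhds 0) := by
    simpa using (tendsto_pow_atTop_nhds_zero_of_lt_one (by norm_num : (0:ℝ) ≤ 1 / 2)
      (by norm_num)).const_mul ε
  have h := ge_of_tendsto' lim fun n => iter n 0 (by norm_num) s hs
  rw [iteratedDeriv_zero] at h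
  exact abs_nonpos_iff.1 h
end

section
/- Let r>0 and let α_0>0, β_0>0, γ_0>0 be such that β_0 = -c_m·α_0 - c_m^2 for some integer m≥1, where c_m = -(π/r)^2·((2m-1)/4)^2. Then for every ε>0 there exist positive reals α, β, γ with |α-α_0| < ε, |β-β_0| < ε, |γ-γ_0| < ε and a four times continuously differentiable function x on [-r,r], not identically zero, satisfying the boundary conditions x'(-r) = x'''(-r) = 0, x(r) = x''(r) = 0, the nonlinear equation x'''' + α·x'' + β·x - γ·x^3 - 3·(x'')^3 - 12·x'·x''·x''' - 3·(x')^2·(x'''' - (α/2)·x'') = 0 on [-r,r], and sup_{s∈[-r,r]}|x^{(k)}(s)| < ε for k = 0,1,2,3,4. (Sufficiency part of the main theorem: bifurcation occurs at every parameter point where the linearization has nontrivial kernel.) -/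
open Real Set

noncomputable section

/-- Constant extension of a continuous function on `[p,q]`. -/
def rodExt {p q : ℝ} (h : p ≤ q) (u : C(Icc p q, ℝ)) : ℝ → ℝ := IccExtend h u

lemma rodExt_continuous {p q : ℝ} (h : p ≤ q) (u : C(Icc p q, ℝ)) : Continuous (rodExt h u) :=
  u.continuous.Icc_extend'

lemma rodExt_apply {p q : ℝ} (h : p ≤ q) (u : C(Icc p q, ℝ)) (s : Icc p q) :
    rodExt h u s = u s := IccExtend_val h u s

lemma rodExt_of_mem {p q : ℝ} (h : p ≤ q) (u : C(Icc p q, ℝ)) {s : ℝ} (hs : s ∈ Icc p q) :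
    rodExt h u s = u ⟨s, hs⟩ := IccExtend_of_mem h u hs

lemma rodExt_bound {p q : ℝ} (h : p ≤ q) (u : C(Icc p q, ℝ)) (s : ℝ) :
    ‖rodExt h u s‖ ≤ ‖u‖ := u.norm_coe_le_norm _

/-- Primitive vanishing at `c`. -/
def rodPrim {p q : ℝ} (h : p ≤ q) (c : ℝ) (u : C(Icc p q, ℝ)) (s : ℝ) : ℝ :=
  ∫ t in c..s, rodExt h u t

lemma rodPrim_hasDerivAt {p q : ℝ} (h : p ≤ q) (c : ℝ) (u : C(Icc p q, ℝ)) (s : ℝ) :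
    HasDerivAt (rodPrim h c u) (rodExt h u s) s :=
  intervalIntegral.integral_hasDerivAt_right
    ((rodExt_continuous h u).intervalIntegrable _ _)
    ((rodExt_continuous h u).stronglyMeasurableAtFilter _ _)
    (rodExt_continuous h u).continuousAt

lemma rodPrim_self {p q : ℝ} (h : p ≤ q) (c : ℝ) (u : C(Icc p q, ℝ)) :
    rodPrim h c u c = 0 := intervalIntegral.integral_same

lemma rodPrim_continuous {p q : ℝ} (h : p ≤ q) (c : ℝ) (u : C(Icc p q, ℝ)) :
    Continuous (rodPrim h c u) :=
  continuous_iff_continuousAt.2 fun s => (rodPrim_hasDerivAt h c u s).continuousAt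

/-- The integration operator on `C([p,q])`. -/
def rodInt {p q : ℝ} (h : p ≤ q) (c : Icc p q) : C(Icc p q, ℝ) →L[ℝ] C(Icc p q, ℝ) :=
  LinearMap.mkContinuous
    { toFun := fun u => ⟨fun s => rodPrim h c u s, (rodPrim_continuous h c u).comp continuous_subtype_val⟩
      map_add' := by
        intro u v
        ext s
        exact intervalIntegral.integral_add ((rodExt_continuous h u).intervalIntegrable _ _)
          ((rodExt_continuous h v).intervalIntegrable _ _)
      map_smul' := by
        intro a u
        ext s
        exact intervalIntegral.integral_const_mul a _ }
    (q - p) (by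
      intro u
      refine (ContinuousMap.norm_le _ (by have := sub_nonneg.2 h; positivity)).2 fun s => ?_
      have h1 : ‖∫ t in (c:ℝ)..s, rodExt h u t‖ ≤ ‖u‖ * |(s:ℝ) - c| :=
        intervalIntegral.norm_integral_le_of_norm_le_const fun t _ => rodExt_bound h u t
      refine h1.trans ?_
      rw [mul_comm]
      refine mul_le_mul_of_nonneg_right ?_ (norm_nonneg _)
      rw [abs_le]
      constructor <;> linarith [s.2.1, s.2.2, c.2.1, c.2.2])

lemma rodInt_apply {p q : ℝ} (h : p ≤ q) (c s : Icc p q) (u : C(Icc p q, ℝ)) :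
    rodInt h c u s = rodPrim h c u s := rfl

lemma rodInt_ext {p q : ℝ} (h : p ≤ q) (c : Icc p q) (u : C(Icc p q, ℝ)) {s : ℝ} (hs : s ∈ Icc p q) :
    rodExt h (rodInt h c u) s = rodPrim h c u s := rodExt_of_mem h _ hs

lemma rodInt_eq {p q : ℝ} (h : p ≤ q) (c : Icc p q) (u w : C(Icc p q, ℝ)) (g : ℝ → ℝ)
    (hg : ∀ s : Icc p q, HasDerivAt g (u s) s) (hc : g c = 0) (hw : ∀ s : Icc p q, w s = g s) :
    rodInt h c u = w := by
  ext s
  rw [hw, rodInt_apply, rodPrim, intervalIntegral.integral_eq_sub_of_hasDerivAt (f := g), hc, sub_zero]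
  · intro t ht
    have ht' : t ∈ Icc p q := (uIcc_subset_Icc c.2 s.2) ht
    rw [rodExt_of_mem h u ht']
    exact hg ⟨t, ht'⟩
  · exact (rodExt_continuous h u).intervalIntegrable _ _

/-- Left end. -/
def rodL {p q : ℝ} (h : p ≤ q) : Icc p q := ⟨p, le_refl p, h⟩
/-- Right end. -/
def rodR {p q : ℝ} (h : p ≤ q) : Icc p q := ⟨q, h, le_refl q⟩

/-- The solution operator of `w'' = u`, `w' p = 0`, `w q = 0`. -/
def rodT {p q : ℝ} (h : p ≤ q) : C(Icc p q, ℝ) →L[ℝ] C(Icc p q, ℝ) :=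
  (rodInt h (rodR h)).comp (rodInt h (rodL h))

lemma rodT_spec {p q : ℝ} (h : p ≤ q) (v : C(Icc p q, ℝ)) :
    ∃ W P : ℝ → ℝ, (∀ s : Icc p q, HasDerivAt W (P s) s) ∧ (∀ s : Icc p q, HasDerivAt P (v s) s) ∧
      P p = 0 ∧ W q = 0 ∧ ∀ s : Icc p q, rodT h v s = W s := by
  refine ⟨rodPrim h q (rodInt h (rodL h) v), rodPrim h p v, ?_, ?_, rodPrim_self _ _ _,
    rodPrim_self _ _ _, fun s => rfl⟩
  · intro s
    have := rodPrim_hasDerivAt h q (rodInt h (rodL h) v) s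
    rwa [rodInt_ext h _ _ s.2] at this
  · intro s
    have := rodPrim_hasDerivAt h p v s
    rwa [rodExt_apply] at this

lemma rodT_eq {p q : ℝ} (h : p ≤ q) (v w : C(Icc p q, ℝ)) (W P : ℝ → ℝ)
    (hW : ∀ s : Icc p q, HasDerivAt W (P s) s) (hP : ∀ s : Icc p q, HasDerivAt P (v s) s)
    (hp : P p = 0) (hq : W q = 0) (hw : ∀ s : Icc p q, w s = W s) : rodT h v = w := by
  have h1 : ∀ s : Icc p q, rodInt h (rodL h) v s = P s := by
    have hc : ContinuousOn P (Icc p q) := fun s hs => (hP ⟨s, hs⟩).continuousAt.continuousWithinAt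
    have := rodInt_eq h (rodL h) v ⟨fun s => P s, continuousOn_iff_continuous_domRestrict.1 hc⟩ P hP hp
      (fun s => rfl)
    intro s
    rw [this]; rfl
  refine rodInt_eq h (rodR h) _ w W (fun s => ?_) hq hw
  exact (hW s).congr_deriv (h1 s).symm

lemma rod_unique {p q ν : ℝ} (hν : ν ≠ 0) (W P : ℝ → ℝ)
    (hW : ∀ s : Icc p q, HasDerivAt W (P s) s)
    (hP : ∀ s : Icc p q, HasDerivAt P (-ν ^ 2 * W s) s) (hp : P p = 0) (s : Icc p q) :
    W s = W p * cos (ν * (s - p)) := by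
  have hθ : ∀ t : ℝ, HasDerivAt (fun t : ℝ => ν * (t - p)) ν t := fun t => by
    simpa using ((hasDerivAt_id t).sub_const p).const_mul ν
  have key : ∀ g : ℝ → ℝ, (∀ s : Icc p q, HasDerivAt g 0 s) → ∀ s : Icc p q, g s = g p := by
    intro g hg s
    exact constant_of_has_deriv_right_zero (a := p) (b := q)
      (fun t ht => (hg ⟨t, ht⟩).continuousAt.continuousWithinAt)
      (fun t ht => (hg ⟨t, ht.1, ht.2.le⟩).hasDerivWithinAt) s s.2
  have h1 := key (fun t => W t * cos (ν * (t - p)) - P t * sin (ν * (t - p)) / ν) (fun t => by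
    have := ((hW t).mul (hθ t).cos).sub (((hP t).mul (hθ t).sin).div_const ν)
    refine this.congr_deriv ?_
    field_simp; ring) s
  have h2 := key (fun t => P t * cos (ν * (t - p)) + ν * (W t * sin (ν * (t - p)))) (fun t => by
    have := ((hP t).mul (hθ t).cos).add (((hW t).mul (hθ t).sin).const_mul ν)
    refine this.congr_deriv ?_
    ring) s
  simp only [sub_self, mul_zero, cos_zero, sin_zero, hp, zero_div, mul_one, add_zero,
    sub_zero] at h1 h2
  have h3 := sin_sq_add_cos_sq (ν * ((s:ℝ) - p))
  rw [← h1]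
  have h4 : P s * sin (ν * (s - p)) / ν * cos (ν * (s - p)) =
     - W s * sin (ν * (s - p)) ^ 2 := by
    field_simp
    linear_combination sin (ν * (s - p)) * h2
  linear_combination -W s * h3 + h4

/-- The inhomogeneous initial value problem. -/
lemma rod_ivp {p q ν : ℝ} (h : p ≤ q) (hν : ν ≠ 0) (f : C(Icc p q, ℝ)) :
    ∃ W P : ℝ → ℝ, (∀ s : Icc p q, HasDerivAt W (P s) s) ∧
      (∀ s : Icc p q, HasDerivAt P (-ν ^ 2 * W s + f s) s) ∧ P p = 0 := by
  have hc1 : Continuous fun t => cos (ν * (t - p)) := by fun_prop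
  have hc2 : Continuous fun t => sin (ν * (t - p)) := by fun_prop
  have hf := rodExt_continuous h f
  have prim : ∀ g : ℝ → ℝ, Continuous g → ∀ s, HasDerivAt (fun s => ∫ t in p..s, g t) (g s) s :=
    fun g hg s => intervalIntegral.integral_hasDerivAt_right
      (hg.intervalIntegrable _ _) (hg.stronglyMeasurableAtFilter _ _) hg.continuousAt
  have hA := prim (fun t => cos (ν * (t - p)) * rodExt h f t) (hc1.mul hf)
  have hB := prim (fun t => sin (ν * (t - p)) * rodExt h f t) (hc2.mul hf)
  have hA0 : (fun s => ∫ t in p..s, cos (ν * (t - p)) * rodExt h f t) p = 0 :=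
    intervalIntegral.integral_same
  have hB0 : (fun s => ∫ t in p..s, sin (ν * (t - p)) * rodExt h f t) p = 0 :=
    intervalIntegral.integral_same
  set A := (fun s => ∫ t in p..s, cos (ν * (t - p)) * rodExt h f t)
  set B := (fun s => ∫ t in p..s, sin (ν * (t - p)) * rodExt h f t)
  have hθ : ∀ t : ℝ, HasDerivAt (fun t : ℝ => ν * (t - p)) ν t := fun t => by
    simpa using ((hasDerivAt_id t).sub_const p).const_mul ν
  refine ⟨fun s => (sin (ν * (s - p)) * A s - cos (ν * (s - p)) * B s) / ν,
    fun s => cos (ν * (s - p)) * A s + sin (ν * (s - p)) * B s, fun s => ?_, fun s => ?_, ?_⟩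
  · have := (((hθ s).sin.mul (hA s)).sub ((hθ s).cos.mul (hB s))).div_const ν
    refine this.congr_deriv ?_
    field_simp; ring
  · have := ((hθ s).cos.mul (hA s)).add ((hθ s).sin.mul (hB s))
    refine this.congr_deriv ?_
    have h3 := sin_sq_add_cos_sq (ν * ((s:ℝ) - p))
    rw [← rodExt_apply h f s]
    field_simp
    linear_combination (rodExt h f s) * h3
  · simp [hA0, hB0]

/-- The eigenfunction. -/
def rodPhi (p q ω : ℝ) : C(Icc p q, ℝ) := ⟨fun s => cos (ω * (s - p)), by fun_prop⟩

lemma rodPhi_apply (p q ω : ℝ) (s : Icc p q) : rodPhi p q ω s = cos (ω * (s - p)) := rfl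

lemma rod_theta (ω p t : ℝ) : HasDerivAt (fun t : ℝ => ω * (t - p)) ω t := by
  simpa using ((hasDerivAt_id t).sub_const p).const_mul ω

lemma rodT_phi {p q ω : ℝ} (h : p ≤ q) (hω : ω ≠ 0) (hcos : cos (ω * (q - p)) = 0) :
    rodT h (rodPhi p q ω) = (-(1 / ω ^ 2)) • rodPhi p q ω := by
  refine rodT_eq h _ _ (fun s => -(1 / ω ^ 2) * cos (ω * (s - p))) (fun s => sin (ω * (s - p)) / ω)
    (fun s => ?_) (fun s => ?_) (by simp) (by simp [hcos]) (fun s => rfl)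
  · refine ((rod_theta ω p s).cos.const_mul (-(1 / ω ^ 2))).congr_deriv ?_
    field_simp
  · refine ((rod_theta ω p s).sin.div_const ω).congr_deriv ?_
    rw [rodPhi_apply]; field_simp

lemma rod_nonres_surj {p q ν : ℝ} (h : p ≤ q) (hν : ν ≠ 0) (hcos : cos (ν * (q - p)) ≠ 0)
    (f : C(Icc p q, ℝ)) : ∃ v : C(Icc p q, ℝ), v + ν ^ 2 • rodT h v = f := by
  obtain ⟨W, P, hW, hP, hp⟩ := rod_ivp h hν f
  set A := -W q / cos (ν * (q - p)) with hA
  let W1 : ℝ → ℝ := fun s => W s + A * cos (ν * (s - p))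
  let P1 : ℝ → ℝ := fun s => P s - A * ν * sin (ν * (s - p))
  have hW1 : ∀ s : Icc p q, HasDerivAt W1 (P1 s) s := fun s =>
    ((hW s).add ((rod_theta ν p s).cos.const_mul A)).congr_deriv (by simp only [P1]; ring)
  have hP1 : ∀ s : Icc p q, HasDerivAt P1 (-ν ^ 2 * W1 s + f s) s := fun s =>
    ((hP s).sub ((rod_theta ν p s).sin.const_mul (A * ν))).congr_deriv (by simp only [W1]; ring)
  have hc : ContinuousOn W1 (Icc p q) := fun s hs => (hW1 ⟨s, hs⟩).continuousAt.continuousWithinAt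
  let w : C(Icc p q, ℝ) := ⟨fun s => W1 s, continuousOn_iff_continuous_domRestrict.1 hc⟩
  have hT : rodT h (f - ν ^ 2 • w) = w := by
    refine rodT_eq h _ _ W1 P1 hW1 (fun s => (hP1 s).congr_deriv ?_) (by simp [P1, hp]) ?_
      (fun s => rfl)
    · change _ = f s - ν ^ 2 * W1 s
      ring
    · simp only [W1, hA]; field_simp; ring
  refine ⟨f - ν ^ 2 • w, ?_⟩
  rw [hT]; abel

lemma rod_ker {p q ν : ℝ} (h : p ≤ q) (hν : ν ≠ 0) (v : C(Icc p q, ℝ))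
    (hv : v + ν ^ 2 • rodT h v = 0) :
    ∃ a : ℝ, a * cos (ν * (q - p)) = 0 ∧ v = a • rodPhi p q ν := by
  obtain ⟨W, P, hW, hP, hp, hq, hTW⟩ := rodT_spec h v
  have hvs : ∀ s : Icc p q, v s = -ν ^ 2 * W s := fun s => by
    have := DFunLike.congr_fun hv s
    change v s + ν ^ 2 * rodT h v s = 0 at this
    rw [hTW] at this
    linarith
  have hu := rod_unique hν W P hW (fun s => (hP s).congr_deriv (hvs s)) hp
  refine ⟨-ν ^ 2 * W p, ?_, ?_⟩
  · have := hu (rodR h)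
    change W q = W p * cos (ν * (q - p)) at this
    rw [mul_assoc, ← this, hq, mul_zero]
  · ext s
    change v s = -ν ^ 2 * W p * cos (ν * (s - p))
    rw [hvs, hu s]; ring

lemma rod_nonres_inj {p q ν : ℝ} (h : p ≤ q) (hν : ν ≠ 0) (hcos : cos (ν * (q - p)) ≠ 0)
    (v : C(Icc p q, ℝ)) (hv : v + ν ^ 2 • rodT h v = 0) : v = 0 := by
  obtain ⟨a, ha, rfl⟩ := rod_ker h hν v hv
  rcases mul_eq_zero.1 ha with ha | ha
  · simp [ha]
  · exact absurd ha hcos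

/-- Resonant particular solution. -/
lemma rod_res (p ω s : ℝ) (hω : ω ≠ 0) :
    HasDerivAt (fun s => (s - p) * sin (ω * (s - p)) / (2 * ω))
      (sin (ω * (s - p)) / (2 * ω) + (s - p) * cos (ω * (s - p)) / 2) s ∧
    HasDerivAt (fun s => sin (ω * (s - p)) / (2 * ω) + (s - p) * cos (ω * (s - p)) / 2)
      (-ω ^ 2 * ((s - p) * sin (ω * (s - p)) / (2 * ω)) + cos (ω * (s - p))) s := by
  have h1 : HasDerivAt (fun s => s - p) 1 s := (hasDerivAt_id s).sub_const p
  have hs := (rod_theta ω p s).sin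
  have hc := (rod_theta ω p s).cos
  constructor
  · refine ((h1.mul hs).div_const (2 * ω)).congr_deriv ?_
    field_simp
  · refine ((hs.div_const (2 * ω)).add ((h1.mul hc).div_const 2)).congr_deriv ?_
    field_simp; ring

lemma rod_res_surj {p q ω : ℝ} (h : p < q) (hω : ω ≠ 0) (hcos : cos (ω * (q - p)) = 0)
    (f : C(Icc p q, ℝ)) : ∃ (v : C(Icc p q, ℝ)) (k : ℝ),
      v + ω ^ 2 • rodT h.le v + k • rodPhi p q ω = f := by
  obtain ⟨W, P, hW, hP, hp⟩ := rod_ivp h.le hω f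
  have hsin : sin (ω * (q - p)) ≠ 0 := by
    intro h0
    have := sin_sq_add_cos_sq (ω * (q - p))
    rw [h0, hcos] at this; norm_num at this
  have hqp : q - p ≠ 0 := by linarith
  set k := W q * (2 * ω) / ((q - p) * sin (ω * (q - p))) with hk
  let W1 : ℝ → ℝ := fun s => W s - k * ((s - p) * sin (ω * (s - p)) / (2 * ω))
  let P1 : ℝ → ℝ := fun s => P s - k * (sin (ω * (s - p)) / (2 * ω) + (s - p) * cos (ω * (s - p)) / 2)
  have hW1 : ∀ s : Icc p q, HasDerivAt W1 (P1 s) s := fun s =>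
    ((hW s).sub ((rod_res p ω s hω).1.const_mul k))
  have hP1 : ∀ s : Icc p q, HasDerivAt P1 (-ω ^ 2 * W1 s + f s - k * cos (ω * (s - p))) s := fun s =>
    ((hP s).sub ((rod_res p ω s hω).2.const_mul k)).congr_deriv (by simp only [W1]; ring)
  have hc : ContinuousOn W1 (Icc p q) := fun s hs => (hW1 ⟨s, hs⟩).continuousAt.continuousWithinAt
  let w : C(Icc p q, ℝ) := ⟨fun s => W1 s, continuousOn_iff_continuous_domRestrict.1 hc⟩
  have hT : rodT h.le (f - ω ^ 2 • w - k • rodPhi p q ω) = w := by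
    refine rodT_eq h.le _ _ W1 P1 hW1 (fun s => (hP1 s).congr_deriv ?_) (by simp [P1, hp]) ?_
      (fun s => rfl)
    · change _ = f s - ω ^ 2 * W1 s - k * cos (ω * (s - p))
      ring
    · simp only [W1, hk]; field_simp; ring
  refine ⟨f - ω ^ 2 • w - k • rodPhi p q ω, k, ?_⟩
  rw [hT]; abel

lemma rod_res_inj {p q ω : ℝ} (h : p < q) (hω : ω ≠ 0) (hcos : cos (ω * (q - p)) = 0)
    (v : C(Icc p q, ℝ)) (k : ℝ) (hv : v + ω ^ 2 • rodT h.le v + k • rodPhi p q ω = 0) :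
    k = 0 := by
  obtain ⟨W, P, hW, hP, hp, hq, hTW⟩ := rodT_spec h.le v
  have hvs : ∀ s : Icc p q, v s = -ω ^ 2 * W s - k * cos (ω * (s - p)) := fun s => by
    have := DFunLike.congr_fun hv s
    change v s + ω ^ 2 * rodT h.le v s + k * cos (ω * (s - p)) = 0 at this
    rw [hTW] at this
    linarith
  have hsin : sin (ω * (q - p)) ≠ 0 := by
    intro h0
    have := sin_sq_add_cos_sq (ω * (q - p))
    rw [h0, hcos] at this; norm_num at this
  have hqp : q - p ≠ 0 := by linarith
  let W1 : ℝ → ℝ := fun s => W s + k * ((s - p) * sin (ω * (s - p)) / (2 * ω))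
  let P1 : ℝ → ℝ := fun s => P s + k * (sin (ω * (s - p)) / (2 * ω) + (s - p) * cos (ω * (s - p)) / 2)
  have hW1 : ∀ s : Icc p q, HasDerivAt W1 (P1 s) s := fun s =>
    ((hW s).add ((rod_res p ω s hω).1.const_mul k))
  have hP1 : ∀ s : Icc p q, HasDerivAt P1 (-ω ^ 2 * W1 s) s := fun s =>
    ((hP s).add ((rod_res p ω s hω).2.const_mul k)).congr_deriv (by
      rw [hvs]; simp only [W1]; ring)
  have hu := rod_unique hω W1 P1 hW1 hP1 (by simp [P1, hp]) (rodR h.le)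
  change W q + k * ((q - p) * sin (ω * (q - p)) / (2 * ω)) = W1 p * cos (ω * (q - p)) at hu
  rw [hq, hcos, zero_add, mul_zero] at hu
  have : (q - p) * sin (ω * (q - p)) / (2 * ω) ≠ 0 := by positivity
  exact (mul_eq_zero.1 hu).resolve_right this

lemma rod_lin_bij {p q ω ν : ℝ} (h : p < q) (hω : ω ≠ 0) (hν : ν ≠ 0)
    (hcos : cos (ω * (q - p)) = 0) (hcos' : cos (ν * (q - p)) ≠ 0)
    (A : C(Icc p q, ℝ) × ℝ → C(Icc p q, ℝ) × ℝ)
    (hA : ∀ v b, A (v, b) = (v + (ω ^ 2 + ν ^ 2) • rodT h.le v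
        + (ω ^ 2 * ν ^ 2) • rodT h.le (rodT h.le v)
        + b • rodT h.le (rodT h.le (rodPhi p q ω)), rodT h.le (rodT h.le v) (rodL h.le))) :
    (∀ w, A w = 0 → w = 0) ∧ Function.Surjective A := by
  set T := rodT h.le with hT
  set φ := rodPhi p q ω with hφ
  have hTφ : T φ = (-(1 / ω ^ 2)) • φ := rodT_phi h.le hω hcos
  have hTTφ : T (T φ) = (1 / ω ^ 4) • φ := by
    rw [hTφ, map_smul, hTφ, smul_smul]; congr 1; field_simp
  have hφL : φ (rodL h.le) = 1 := by
    rw [hφ, rodPhi_apply]; simp [rodL]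
  have hne : 1 - ν ^ 2 / ω ^ 2 ≠ 0 := by
    intro h0
    have h1 : ν ^ 2 = ω ^ 2 := by
      field_simp at h0; linarith
    rcases sq_eq_sq_iff_eq_or_eq_neg.1 h1 with h2 | h2
    · exact hcos' (h2 ▸ hcos)
    · apply hcos'
      rw [h2, neg_mul, cos_neg, hcos]
  have hP2φ : φ + ν ^ 2 • T φ = (1 - ν ^ 2 / ω ^ 2) • φ := by
    rw [hTφ, smul_smul, sub_smul, one_smul, sub_eq_add_neg, ← neg_smul]
    congr 2; ring
  have hfac : ∀ v : C(Icc p q, ℝ), v + (ω ^ 2 + ν ^ 2) • T v + (ω ^ 2 * ν ^ 2) • T (T v)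
      = (v + ω ^ 2 • T v) + ν ^ 2 • T (v + ω ^ 2 • T v) := by
    intro v
    rw [map_add, map_smul]
    module
  constructor
  · rintro ⟨v, b⟩ hw
    rw [hA, Prod.mk_eq_zero] at hw
    obtain ⟨h1, h2⟩ := hw
    set b' := b / ω ^ 4 / (1 - ν ^ 2 / ω ^ 2) with hb'
    have h3 : (v + ω ^ 2 • T v + b' • φ) + ν ^ 2 • T (v + ω ^ 2 • T v + b' • φ) = 0 := by
      rw [hfac, hTTφ] at h1
      rw [map_add, map_smul, ← h1]
      have : b' • (φ + ν ^ 2 • T φ) = b • (1 / ω ^ 4) • φ := by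
        rw [hP2φ, smul_smul, smul_smul]
        congr 1
        rw [hb', div_mul_cancel₀ _ hne]; ring
      rw [← this]
      module
    have h4 := rod_nonres_inj h.le hν hcos' _ h3
    have h5 := rod_res_inj h hω hcos v b' h4
    have hb : b = 0 := by
      rw [hb', div_eq_zero_iff, div_eq_zero_iff] at h5
      simpa [hne, hω] using h5
    rw [h5, zero_smul, add_zero] at h4
    obtain ⟨a, -, rfl⟩ := rod_ker h.le hω v h4
    rw [← hφ, map_smul, map_smul, hTTφ] at h2
    change a * (1 / ω ^ 4 * φ (rodL h.le)) = 0 at h2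
    rw [hφL] at h2
    have ha : a = 0 := by simpa [hω] using h2
    rw [ha, hb, zero_smul]; rfl
  · rintro ⟨f, g⟩
    obtain ⟨f', hf'⟩ := rod_nonres_surj h.le hν hcos' f
    obtain ⟨v, k, hv⟩ := rod_res_surj h hω hcos f'
    rw [← hT, ← hφ] at hv
    rw [← hT] at hf'
    have hP1φ : φ + ω ^ 2 • T φ = 0 := by
      rw [hTφ, smul_smul]
      have : ω ^ 2 * -(1 / ω ^ 2) = -1 := by field_simp
      rw [this]; module
    set a := ω ^ 4 * (g - T (T v) (rodL h.le)) with ha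
    refine ⟨(v + a • φ, k * ω ^ 4 * (1 - ν ^ 2 / ω ^ 2)), ?_⟩
    rw [hA, Prod.mk.injEq]
    constructor
    · rw [hfac]
      have e1 : v + a • φ + ω ^ 2 • T (v + a • φ) = v + ω ^ 2 • T v := by
        rw [map_add, map_smul]
        have : a • (φ + ω ^ 2 • T φ) = 0 := by rw [hP1φ, smul_zero]
        rw [← add_zero (v + ω ^ 2 • T v), ← this]; module
      rw [e1, ← hf', ← hv, hTTφ, smul_smul]
      have e2 : (k * ω ^ 4 * (1 - ν ^ 2 / ω ^ 2) * (1 / ω ^ 4)) • φ = k • (φ + ν ^ 2 • T φ) := by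
        rw [hP2φ, smul_smul]; congr 1; field_simp
      rw [e2, map_add T _ (k • φ), map_smul T k]
      module
    · rw [map_add, map_add, map_smul, map_smul, hTTφ]
      change T (T v) (rodL h.le) + a * (1 / ω ^ 4 * φ (rodL h.le)) = g
      rw [hφL, ha]; field_simp; ring

/-- The nonlinear part of the equation. -/
def rodN {p q : ℝ} (h : p ≤ q) (α γ : ℝ) (u : C(Icc p q, ℝ)) : C(Icc p q, ℝ) :=
  γ • (rodT h (rodT h u)) ^ 3 + (3 : ℝ) • (rodT h u) ^ 3
    + (12 : ℝ) • (rodInt h (rodL h) (rodT h u) * rodT h u * rodInt h (rodL h) u)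
    + (3 : ℝ) • ((rodInt h (rodL h) (rodT h u)) ^ 2 * (u - (α / 2) • rodT h u))

/-- The full map. -/
def rodF {p q : ℝ} (h : p ≤ q) (α γ : ℝ) (z : ℝ × (C(Icc p q, ℝ) × ℝ)) : C(Icc p q, ℝ) × ℝ :=
  (z.2.1 + α • rodT h z.2.1 + z.2.2 • rodT h (rodT h z.2.1) - z.1 ^ 2 • rodN h α γ z.2.1,
    ContinuousMap.evalCLM ℝ (rodL h) (rodT h (rodT h z.2.1)))

lemma rodF_contDiff {p q : ℝ} (h : p ≤ q) (α γ : ℝ) : ContDiff ℝ 1 (rodF h α γ) := by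
  unfold rodF rodN
  fun_prop

lemma rod_bif {p q ω ν : ℝ} (h : p < q) (hω : ω ≠ 0) (hν : ν ≠ 0)
    (hcos : cos (ω * (q - p)) = 0) (hcos' : cos (ν * (q - p)) ≠ 0) (γ : ℝ) :
    ∃ M : ℝ, ∀ η > 0, ∃ (a β : ℝ) (u : C(Icc p q, ℝ)), 0 < a ∧ a < η ∧ |β - ω ^ 2 * ν ^ 2| < η ∧
      ‖u‖ ≤ M ∧ rodT h.le (rodT h.le u) (rodL h.le) ≠ 0 ∧
      u + (ω ^ 2 + ν ^ 2) • rodT h.le u + β • rodT h.le (rodT h.le u)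
        - a ^ 2 • rodN h.le (ω ^ 2 + ν ^ 2) γ u = 0 := by
  set T := rodT h.le with hT
  set φ := rodPhi p q ω with hφ
  set α := ω ^ 2 + ν ^ 2 with hα
  set β₀ := ω ^ 2 * ν ^ 2 with hβ₀
  have hTφ : T φ = (-(1 / ω ^ 2)) • φ := rodT_phi h.le hω hcos
  have hTTφ : T (T φ) = (1 / ω ^ 4) • φ := by
    rw [hTφ, map_smul, hTφ, smul_smul]; congr 1; field_simp
  have hφL : φ (rodL h.le) = 1 := by
    rw [hφ, rodPhi_apply]; simp [rodL]
  let z0 : ℝ × (C(Icc p q, ℝ) × ℝ) := (0, (φ, β₀))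
  have hF0 : rodF h.le α γ z0 = (0, 1 / ω ^ 4) := by
    simp only [rodF, z0, ← hT, Prod.mk.injEq]
    constructor
    · rw [hTTφ, hTφ, smul_smul, smul_smul]
      have : (1 : ℝ) + α * -(1 / ω ^ 2) + β₀ * (1 / ω ^ 4) = 0 := by
        rw [hα, hβ₀]; field_simp; ring
      have h2 : ((1 : ℝ) + α * -(1 / ω ^ 2) + β₀ * (1 / ω ^ 4)) • φ = 0 := by
        rw [this, zero_smul]
      rw [← h2]
      simp only [ne_eq, OfNat.ofNat_ne_zero, not_false_eq_true, zero_pow, zero_smul, sub_zero]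
      module
    · rw [hTTφ]
      change 1 / ω ^ 4 * φ (rodL h.le) = _
      rw [hφL, mul_one]
  have hd : HasStrictFDerivAt (rodF h.le α γ) (fderiv ℝ (rodF h.le α γ) z0) z0 :=
    (rodF_contDiff h.le α γ).contDiffAt.hasStrictFDerivAt (by norm_num)
  set D := fderiv ℝ (rodF h.le α γ) z0
  have hD : ∀ v b, (D ∘L .inr ℝ ℝ (C(Icc p q, ℝ) × ℝ)) (v, b) = (v + α • T v + β₀ • T (T v)
        + b • T (T φ), T (T v) (rodL h.le)) := by
    intro v b
    have h1 : HasFDerivAt (fun w : C(Icc p q, ℝ) × ℝ => rodF h.le α γ (0, w))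
        (D ∘L .inr ℝ ℝ (C(Icc p q, ℝ) × ℝ)) (φ, β₀) := by
      have h2 : HasFDerivAt (fun w : C(Icc p q, ℝ) × ℝ => ((0:ℝ), w))
          (.inr ℝ ℝ (C(Icc p q, ℝ) × ℝ)) (φ, β₀) := hasFDerivAt_prodMk_right _ _
      exact HasFDerivAt.comp (φ, β₀) hd.hasFDerivAt h2
    have h3 : (fun w : C(Icc p q, ℝ) × ℝ => rodF h.le α γ (0, w)) =
        fun w => (w.1 + α • T w.1 + w.2 • T (T w.1),
          ContinuousMap.evalCLM ℝ (rodL h.le) (T (T w.1))) := by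
      funext w
      simp [rodF, hT]
    rw [h3] at h1
    have hfst : HasFDerivAt (fun w : C(Icc p q, ℝ) × ℝ => w.1) (.fst ℝ _ _) (φ, β₀) := hasFDerivAt_fst
    have hsnd : HasFDerivAt (fun w : C(Icc p q, ℝ) × ℝ => w.2) (.snd ℝ _ _) (φ, β₀) := hasFDerivAt_snd
    have hT1 := T.hasFDerivAt.comp (φ, β₀) hfst
    have hT2 := T.hasFDerivAt.comp (φ, β₀) hT1
    have h4 := (((hfst.add (hT1.const_smul α)).add (hsnd.smul hT2)).prodMk
      ((ContinuousMap.evalCLM ℝ (rodL h.le)).hasFDerivAt.comp (φ, β₀) hT2))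
    rw [h1.unique h4]
    simp [add_assoc]
  obtain ⟨hinj, hsurj⟩ := rod_lin_bij h hω hν hcos hcos' _ hD
  have hinv : (D ∘L .inr ℝ ℝ (C(Icc p q, ℝ) × ℝ)).IsInvertible :=
    ⟨ContinuousLinearEquiv.ofBijective _ (LinearMap.ker_eq_bot'.2 hinj)
      (LinearMap.range_eq_top.2 hsurj), ContinuousLinearEquiv.coe_ofBijective _ _ _⟩
  have hlim := hd.tendsto_implicitFunctionOfProdDomain hinv
  have hev := hd.eventually_apply_implicitFunctionOfProdDomain hinv
  set ψ := hd.implicitFunctionOfProdDomain hinv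
  change Filter.Tendsto ψ (nhds 0) (nhds (φ, β₀)) at hlim
  change ∀ᶠ x in nhds (0:ℝ), _ at hev
  refine ⟨‖φ‖ + 1, fun η hη => ?_⟩
  have e1 : ∀ᶠ x in nhds (0:ℝ), ‖(ψ x).1‖ < ‖φ‖ + 1 := by
    have : Filter.Tendsto (fun x => ‖(ψ x).1‖) (nhds 0) (nhds ‖φ‖) := (hlim.fst_nhds).norm
    exact this.eventually (gt_mem_nhds (by linarith))
  have e2 : ∀ᶠ x in nhds (0:ℝ), |(ψ x).2 - β₀| < η := by
    have : Filter.Tendsto (fun x => (ψ x).2) (nhds 0) (nhds β₀) := hlim.snd_nhds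
    exact (Metric.tendsto_nhds.1 this η hη)
  have e3 : ∀ᶠ x in nhds (0:ℝ), x < η := gt_mem_nhds hη
  have e4 : ∀ᶠ x in nhdsWithin (0:ℝ) (Ioi 0), 0 < x := self_mem_nhdsWithin
  obtain ⟨a, ⟨⟨h1, h2⟩, h3, h5⟩, h4⟩ :=
    ((((e1.and e2).and (e3.and hev)).filter_mono nhdsWithin_le_nhds).and e4).exists
  rw [hF0] at h5
  have h6 := congrArg Prod.fst h5
  have h7 := congrArg Prod.snd h5
  refine ⟨a, (ψ a).2, (ψ a).1, h4, h3, h2, h1.le, ?_, h6⟩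
  change T (T (ψ a).1) (rodL h.le) = 1 / ω ^ 4 at h7
  rw [h7]; positivity

lemma rod_freq (ν₀ d : ℝ) (hd : 0 < d) : ∃ᶠ ν in nhds ν₀, cos (ν * d) ≠ 0 := by
  intro hcon
  have hev : ∀ᶠ ν in nhds ν₀, cos (ν * d) = 0 := by
    filter_upwards [hcon] with ν hν using not_not.1 hν
  have h1 : HasDerivAt (fun ν => cos (ν * d)) (-sin (ν₀ * d) * d) ν₀ := by
    have := ((hasDerivAt_id ν₀).mul_const d).cos
    simpa using this
  have h2 : HasDerivAt (fun ν => cos (ν * d)) 0 ν₀ :=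
    (hasDerivAt_const ν₀ (0:ℝ)).congr_of_eventuallyEq hev
  have h3 := h1.unique h2
  have h4 := hev.self_of_nhds
  have h5 := sin_sq_add_cos_sq (ν₀ * d)
  have h6 : sin (ν₀ * d) = 0 := by
    rcases mul_eq_zero.1 h3 with h | h
    · linarith
    · exact absurd h hd.ne'
  rw [h4, h6] at h5; norm_num at h5

lemma rod_iter (y0 y1 y2 y3 y4 : ℝ → ℝ) (h0 : ∀ s, HasDerivAt y0 (y1 s) s)
    (h1 : ∀ s, HasDerivAt y1 (y2 s) s) (h2 : ∀ s, HasDerivAt y2 (y3 s) s)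
    (h3 : ∀ s, HasDerivAt y3 (y4 s) s) (h4 : Continuous y4) :
    ContDiff ℝ 4 y0 ∧ iteratedDeriv 1 y0 = y1 ∧ iteratedDeriv 2 y0 = y2 ∧
      iteratedDeriv 3 y0 = y3 ∧ iteratedDeriv 4 y0 = y4 := by
  have d0 : deriv y0 = y1 := funext fun s => (h0 s).deriv
  have d1 : deriv y1 = y2 := funext fun s => (h1 s).deriv
  have d2 : deriv y2 = y3 := funext fun s => (h2 s).deriv
  have d3 : deriv y3 = y4 := funext fun s => (h3 s).deriv
  have i1 : iteratedDeriv 1 y0 = y1 := by rw [iteratedDeriv_one, d0]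
  have i2 : iteratedDeriv 2 y0 = y2 := by rw [iteratedDeriv_succ, i1, d1]
  have i3 : iteratedDeriv 3 y0 = y3 := by rw [iteratedDeriv_succ, i2, d2]
  have i4 : iteratedDeriv 4 y0 = y4 := by rw [iteratedDeriv_succ, i3, d3]
  refine ⟨?_, i1, i2, i3, i4⟩
  have step : ∀ (n : ℕ) (f g : ℝ → ℝ), (∀ s, HasDerivAt f (g s) s) → ContDiff ℝ n g →
      ContDiff ℝ (n + 1 : ℕ) f := by
    intro n f g hf hg
    push_cast
    refine contDiff_succ_iff_deriv.2 ⟨fun s => (hf s).differentiableAt, by simp, ?_⟩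
    rwa [show deriv f = g from funext fun s => (hf s).deriv]
  have c4 : ContDiff ℝ (0 : ℕ) y4 := by exact_mod_cast (contDiff_zero (𝕜 := ℝ)).2 h4
  exact_mod_cast step 3 _ _ h0 (step 2 _ _ h1 (step 1 _ _ h2 (step 0 _ _ h3 c4)))

lemma rodInt_eq' {p q : ℝ} (h : p ≤ q) (c : Icc p q) (u : C(Icc p q, ℝ)) (g : ℝ → ℝ)
    (hg : ∀ s : Icc p q, HasDerivAt g (u s) s) (hc : g c = 0) (s : Icc p q) :
    rodInt h c u s = g s := by
  have hcont : ContinuousOn g (Icc p q) := fun s hs => (hg ⟨s, hs⟩).continuousAt.continuousWithinAt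
  have := rodInt_eq h c u ⟨fun s => g s, continuousOn_iff_continuous_domRestrict.1 hcont⟩ g hg hc
    (fun s => rfl)
  rw [this]; rfl

/-- Global fourfold primitive. -/
lemma rod_lift {p q : ℝ} (h : p ≤ q) (u : C(Icc p q, ℝ)) :
    ∃ y0 y1 y2 y3 y4 : ℝ → ℝ, (∀ s, HasDerivAt y0 (y1 s) s) ∧ (∀ s, HasDerivAt y1 (y2 s) s) ∧
      (∀ s, HasDerivAt y2 (y3 s) s) ∧ (∀ s, HasDerivAt y3 (y4 s) s) ∧ Continuous y4 ∧
      y0 q = 0 ∧ y1 p = 0 ∧ y2 q = 0 ∧ y3 p = 0 ∧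
      (∀ s : Icc p q, y4 s = u s) ∧ (∀ s : Icc p q, y3 s = rodInt h (rodL h) u s) ∧
      (∀ s : Icc p q, y2 s = rodT h u s) ∧
      (∀ s : Icc p q, y1 s = rodInt h (rodL h) (rodT h u) s) ∧
      (∀ s : Icc p q, y0 s = rodT h (rodT h u) s) := by
  have prim : ∀ (c : ℝ) (g : ℝ → ℝ), Continuous g → ∃ G : ℝ → ℝ, Continuous G ∧
      (∀ s, HasDerivAt G (g s) s) ∧ G c = 0 := by
    intro c g hg
    have hG : ∀ s, HasDerivAt (fun s => ∫ t in c..s, g t) (g s) s :=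
      fun s => intervalIntegral.integral_hasDerivAt_right
        (hg.intervalIntegrable _ _) (hg.stronglyMeasurableAtFilter _ _) hg.continuousAt
    exact ⟨_, continuous_iff_continuousAt.2 fun s => (hG s).continuousAt, hG,
      intervalIntegral.integral_same⟩
  have c4 := rodExt_continuous h u
  obtain ⟨y3, c3, d3, z3⟩ := prim p _ c4
  obtain ⟨y2, c2, d2, z2⟩ := prim q _ c3
  obtain ⟨y1, c1, d1, z1⟩ := prim p _ c2
  obtain ⟨y0, c0, d0, z0⟩ := prim q _ c1
  have r3 : ∀ s : Icc p q, rodInt h (rodL h) u s = y3 s :=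
    rodInt_eq' h _ _ _ (fun s => (d3 s).congr_deriv (rodExt_apply h u s)) z3
  have r2 : ∀ s : Icc p q, rodT h u s = y2 s :=
    rodInt_eq' h (rodR h) _ _ (fun s => (d2 s).congr_deriv (r3 s).symm) z2
  have r1 : ∀ s : Icc p q, rodInt h (rodL h) (rodT h u) s = y1 s :=
    rodInt_eq' h _ _ _ (fun s => (d1 s).congr_deriv (r2 s).symm) z1
  have r0 : ∀ s : Icc p q, rodT h (rodT h u) s = y0 s :=
    rodInt_eq' h (rodR h) _ _ (fun s => (d0 s).congr_deriv (r1 s).symm) z0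
  exact ⟨y0, y1, y2, y3, _, d0, d1, d2, d3, c4, z0, z1, z2, z3, rodExt_apply h u,
    fun s => (r3 s).symm, fun s => (r2 s).symm, fun s => (r1 s).symm, fun s => (r0 s).symm⟩

end

/-- Bifurcation occurs at every parameter point where the linearization has a
nontrivial kernel: arbitrarily close to `(0,α₀,β₀,γ₀)` there are nontrivial solutions. -/
theorem stmt_14 (r : ℝ) (hr : 0 < r)
    (c : ℕ → ℝ)
    (hc : ∀ m : ℕ, c m = -(π / r) ^ 2 * ((2 * (m : ℝ) - 1) / 4) ^ 2)
    (α₀ β₀ γ₀ : ℝ) (hα₀ : 0 < α₀) (hβ₀ : 0 < β₀) (hγ₀ : 0 < γ₀)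
    (m : ℕ) (hm : 1 ≤ m) (hray : β₀ = -(c m) * α₀ - (c m) ^ 2) :
    ∀ ε > 0, ∃ α β γ : ℝ, ∃ x : ℝ → ℝ,
      0 < α ∧ 0 < β ∧ 0 < γ ∧
      |α - α₀| < ε ∧ |β - β₀| < ε ∧ |γ - γ₀| < ε ∧
      ContDiff ℝ 4 x ∧
      (∃ s ∈ Icc (-r) r, x s ≠ 0) ∧
      iteratedDeriv 1 x (-r) = 0 ∧ iteratedDeriv 3 x (-r) = 0 ∧
      x r = 0 ∧ iteratedDeriv 2 x r = 0 ∧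
      (∀ s ∈ Icc (-r) r,
        iteratedDeriv 4 x s + α * iteratedDeriv 2 x s + β * x s
          - γ * (x s) ^ 3 - 3 * (iteratedDeriv 2 x s) ^ 3
          - 12 * iteratedDeriv 1 x s * iteratedDeriv 2 x s * iteratedDeriv 3 x s
          - 3 * (iteratedDeriv 1 x s) ^ 2 *
              (iteratedDeriv 4 x s - (α / 2) * iteratedDeriv 2 x s) = 0) ∧
      (∀ k : ℕ, k ≤ 4 → ∀ s ∈ Icc (-r) r, |iteratedDeriv k x s| < ε) := by
  intro ε hε
  have hm1 : (1:ℝ) ≤ m := by exact_mod_cast hm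
  set ω := (2 * (m:ℝ) - 1) * π / (4 * r) with hωdef
  have hω : 0 < ω := by
    have : 0 < 2 * (m:ℝ) - 1 := by linarith
    have := pi_pos
    positivity
  have hcm : c m = -ω ^ 2 := by rw [hc, hωdef]; field_simp
  have hcos : cos (ω * (r - -r)) = 0 := by
    rw [cos_eq_zero_iff]
    refine ⟨(m:ℤ) - 1, ?_⟩
    push_cast
    rw [hωdef]; field_simp; ring
  rw [hcm] at hray
  have hβω : β₀ = ω ^ 2 * (α₀ - ω ^ 2) := by rw [hray]; ring
  have hdiff : 0 < α₀ - ω ^ 2 := by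
    rw [hβω] at hβ₀
    exact pos_of_mul_pos_right hβ₀ (by positivity)
  set ν₀ := √(α₀ - ω ^ 2) with hν₀
  have hν₀pos : 0 < ν₀ := sqrt_pos.2 hdiff
  have hν₀sq : ν₀ ^ 2 = α₀ - ω ^ 2 := sq_sqrt hdiff.le
  have ev1 : ∀ᶠ ν in nhds ν₀, |ω ^ 2 + ν ^ 2 - α₀| < ε := by
    have : ContinuousAt (fun ν : ℝ => |ω ^ 2 + ν ^ 2 - α₀|) ν₀ := by fun_prop
    refine this.eventually_lt continuousAt_const ?_
    rw [hν₀sq]; simpa using hε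
  have ev2 : ∀ᶠ ν in nhds ν₀, |ω ^ 2 * ν ^ 2 - β₀| < ε / 2 := by
    have : ContinuousAt (fun ν : ℝ => |ω ^ 2 * ν ^ 2 - β₀|) ν₀ := by fun_prop
    refine this.eventually_lt continuousAt_const ?_
    rw [hν₀sq, ← hβω]; simpa using hε
  have ev3 : ∀ᶠ ν in nhds ν₀, 0 < ν := lt_mem_nhds hν₀pos
  obtain ⟨ν, hcos', ⟨hν1, hν2⟩, hν⟩ :=
    ((rod_freq ν₀ (r - -r) (by linarith)).and_eventually ((ev1.and ev2).and ev3)).exists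
  have hlt : -r < r := by linarith
  obtain ⟨M, hM⟩ := rod_bif hlt hω.ne' hν.ne' hcos hcos' γ₀
  set I := rodInt hlt.le (rodL hlt.le) with hI
  set T := rodT hlt.le with hT
  set C := (1 + ‖I‖ + ‖T‖ + ‖I.comp T‖ + ‖T.comp T‖) * (|M| + 1) with hC
  have hCpos : 0 < C := by positivity
  obtain ⟨a, β, u, ha, haη, hβη, huM, hne, heq⟩ :=
    hM (min (ε / 2) (min (ω ^ 2 * ν ^ 2) (ε / C))) (by positivity)
  obtain ⟨haη1, -, haη3⟩ : a < ε / 2 ∧ a < ω ^ 2 * ν ^ 2 ∧ a < ε / C := by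
    simpa only [lt_min_iff] using haη
  obtain ⟨hβ1, hβ2, -⟩ : _ < ε / 2 ∧ _ < ω ^ 2 * ν ^ 2 ∧ _ < ε / C := by
    simpa only [lt_min_iff] using hβη
  have haC : a * C < ε := (lt_div_iff₀ hCpos).1 haη3
  have bnd : ∀ (S : C(Icc (-r) r, ℝ) →L[ℝ] C(Icc (-r) r, ℝ)),
      ‖S‖ ≤ 1 + ‖I‖ + ‖T‖ + ‖I.comp T‖ + ‖T.comp T‖ → ∀ s, |a * S u s| < ε := by
    intro S hS s
    refine lt_of_le_of_lt ?_ haC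
    rw [abs_mul, abs_of_pos ha]
    refine mul_le_mul_of_nonneg_left ?_ ha.le
    calc |S u s| ≤ ‖S u‖ := (S u).norm_coe_le_norm s
      _ ≤ ‖S‖ * ‖u‖ := S.le_opNorm u
      _ ≤ _ := mul_le_mul hS (huM.trans ((le_abs_self M).trans (by linarith))) (norm_nonneg _)
        (by positivity)
  have n1 := norm_nonneg I
  have n2 := norm_nonneg T
  have n3 := norm_nonneg (I.comp T)
  have n4 := norm_nonneg (T.comp T)
  have b0 := bnd (T.comp T) (by linarith)
  have b1 := bnd (I.comp T) (by linarith)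
  have b2 := bnd T (by linarith)
  have b3 := bnd I (by linarith)
  have b4 := bnd (ContinuousLinearMap.id ℝ _) (by
    have := ContinuousLinearMap.norm_id_le (𝕜 := ℝ) (E := C(Icc (-r) r, ℝ))
    linarith)
  obtain ⟨y0, y1, y2, y3, y4, d0, d1, d2, d3, c4, z0, z1, z2, z3, r4, r3, r2, r1, r0⟩ :=
    rod_lift hlt.le u
  rw [← hT] at r0 r1 r2
  rw [← hI] at r1 r3
  obtain ⟨hx, i1, i2, i3, i4⟩ := rod_iter (fun s => a * y0 s) (fun s => a * y1 s)
    (fun s => a * y2 s) (fun s => a * y3 s) (fun s => a * y4 s) (fun s => (d0 s).const_mul a)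
    (fun s => (d1 s).const_mul a) (fun s => (d2 s).const_mul a) (fun s => (d3 s).const_mul a)
    (c4.const_mul a)
  refine ⟨ω ^ 2 + ν ^ 2, β, γ₀, fun s => a * y0 s, by positivity, ?_, hγ₀, hν1, ?_, by simpa using hε,
    hx, ⟨-r, ⟨le_refl _, hlt.le⟩, ?_⟩, ?_, ?_, ?_, ?_, ?_, ?_⟩
  · linarith [(abs_lt.1 hβ2).1]
  · have := abs_add_le (β - ω ^ 2 * ν ^ 2) (ω ^ 2 * ν ^ 2 - β₀)
    rw [sub_add_sub_cancel] at this
    linarith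
  · have := r0 (rodL hlt.le)
    change y0 (-r) = _ at this
    change a * y0 (-r) ≠ 0
    rw [this]
    exact mul_ne_zero ha.ne' hne
  · rw [i1]; simp [z1]
  · rw [i3]; simp [z3]
  · simp [z0]
  · rw [i2]; simp [z2]
  · intro s hs
    rw [i1, i2, i3, i4]
    have e := DFunLike.congr_fun heq ⟨s, hs⟩
    change u ⟨s, hs⟩ + (ω ^ 2 + ν ^ 2) * T u ⟨s, hs⟩ + β * T (T u) ⟨s, hs⟩
      - a ^ 2 * (γ₀ * (T (T u) ⟨s, hs⟩) ^ 3 + 3 * (T u ⟨s, hs⟩) ^ 3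
        + 12 * (I (T u) ⟨s, hs⟩ * T u ⟨s, hs⟩ * I u ⟨s, hs⟩)
        + 3 * ((I (T u) ⟨s, hs⟩) ^ 2 * (u ⟨s, hs⟩ - ((ω ^ 2 + ν ^ 2) / 2) * T u ⟨s, hs⟩))) = 0 at e
    rw [← r0, ← r1, ← r2, ← r3, ← r4] at e
    linear_combination a * e
  · intro k hk s hs
    interval_cases k
    · rw [iteratedDeriv_zero]
      change |a * y0 s| < ε
      rw [r0 ⟨s, hs⟩]; exact b0 _
    · rw [i1]
      change |a * y1 s| < ε
      rw [r1 ⟨s, hs⟩]; exact b1 _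
    · rw [i2]
      change |a * y2 s| < ε
      rw [r2 ⟨s, hs⟩]; exact b2 _
    · rw [i3]
      change |a * y3 s| < ε
      rw [r3 ⟨s, hs⟩]; exact b3 _
    · rw [i4]
      change |a * y4 s| < ε
      rw [r4 ⟨s, hs⟩]; exact b4 _
end

section
/- Let r>0, let m≥1 be an integer with c_m = -(π/r)^2·((2m-1)/4)^2, and let α_0>0, β_0>0, γ_0>0 be such that β_0 = -c_m·α_0 - c_m^2 while β_0 ≠ -c_k·α_0 - c_k^2 for every integer k≥1 with k ≠ m (simple point). Then for every ε>0 there exist a positive real α with |α-α_0| < ε and a four times continuously differentiable function x on [-r,r], not identically zero, satisfying the boundary conditions x'(-r) = x'''(-r) = 0, x(r) = x''(r) = 0, the nonlinear equation x'''' + α·x'' + β_0·x - γ_0·x^3 - 3·(x'')^3 - 12·x'·x''·x''' - 3·(x')^2·(x'''' - (α/2)·x'') = 0 on [-r,r], and sup_{s∈[-r,r]}|x^{(k)}(s)| < ε for k = 0,1,2,3,4. (Bifurcation with respect to the compressive-force parameter α alone, with β and γ fixed.) -/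
open Real Set

namespace Rod

/-- The Banach algebra of continuous functions on `[-r,r]`. -/
abbrev E (r : ℝ) := C(Icc (-r) r, ℝ)

/-- Constant extension to the line. -/
noncomputable def ext {r : ℝ} (hr : 0 < r) (u : E r) : ℝ → ℝ :=
  fun s => u (projIcc (-r) r (by linarith) s)

section
variable {r : ℝ} (hr : 0 < r)

lemma ext_cont (u : E r) : Continuous (ext hr u) :=
  u.continuous.comp continuous_projIcc

lemma ext_of_mem (u : E r) {s : ℝ} (hs : s ∈ Icc (-r) r) : ext hr u s = u ⟨s, hs⟩ := by
  simp [ext, projIcc_of_mem _ hs]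

lemma ext_add (u v : E r) (s : ℝ) : ext hr (u + v) s = ext hr u s + ext hr v s := rfl
lemma ext_mul (u v : E r) (s : ℝ) : ext hr (u * v) s = ext hr u s * ext hr v s := rfl
lemma ext_smul (a : ℝ) (u : E r) (s : ℝ) : ext hr (a • u) s = a * ext hr u s := rfl
lemma ext_le (u : E r) (s : ℝ) : |ext hr u s| ≤ ‖u‖ := u.norm_coe_le_norm _

lemma prim_hasDeriv {g : ℝ → ℝ} (hg : Continuous g) (p s : ℝ) :
    HasDerivAt (fun t => ∫ τ in p..t, g τ) (g s) s :=
  intervalIntegral.integral_hasDerivAt_right (hg.intervalIntegrable _ _)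
    hg.stronglyMeasurable.stronglyMeasurableAtFilter hg.continuousAt

lemma prim_cont {g : ℝ → ℝ} (hg : Continuous g) (p : ℝ) :
    Continuous (fun t => ∫ τ in p..t, g τ) :=
  continuous_iff_continuousAt.2 fun s => (prim_hasDeriv hg p s).continuousAt

/-- The primitive vanishing at `p`. -/
noncomputable def J (p : ℝ) : E r →L[ℝ] E r :=
  LinearMap.mkContinuous
    { toFun := fun u => ⟨fun s => ∫ τ in p..(s : ℝ), ext hr u τ,
        (prim_cont (ext_cont hr u) p).comp continuous_subtype_val⟩
      map_add' := by
        intro u v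
        ext s
        simp only [ext_add, ContinuousMap.coe_mk, ContinuousMap.add_apply]
        exact intervalIntegral.integral_add ((ext_cont hr u).intervalIntegrable _ _)
          ((ext_cont hr v).intervalIntegrable _ _)
      map_smul' := by
        intro a u
        ext s
        simp [ext_smul] }
    (r + |p|) (by
      intro u
      rw [ContinuousMap.norm_le _ (by positivity)]
      intro s
      have h := intervalIntegral.norm_integral_le_of_norm_le_const (a := p) (b := (s : ℝ))
        (f := ext hr u) (C := ‖u‖) (fun x _ => ext_le hr u x)
      have h2 : |(s : ℝ) - p| ≤ r + |p| := by
        have := abs_le.2 s.2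
        exact (abs_sub _ _).trans (by linarith)
      refine h.trans ?_
      rw [mul_comm]
      exact mul_le_mul_of_nonneg_right h2 (norm_nonneg _))

lemma J_apply (p : ℝ) (u : E r) (s : Icc (-r) r) :
    J hr p u s = ∫ τ in p..(s : ℝ), ext hr u τ := rfl

lemma J_eq {p : ℝ} (hp : p ∈ Icc (-r) r) (f : E r) (X X1 : ℝ → ℝ) (hX1 : Continuous X1)
    (hX : ∀ s, HasDerivAt X (X1 s) s) (h0 : X p = 0) (hf : ∀ s : Icc (-r) r, f s = X1 s)
    (s : Icc (-r) r) : J hr p f s = X s := by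
  rw [J_apply]
  have : ∫ τ in p..(s : ℝ), ext hr f τ = ∫ τ in p..(s : ℝ), X1 τ := by
    apply intervalIntegral.integral_congr
    intro τ hτ
    have : τ ∈ Icc (-r) r := (uIcc_subset_Icc hp s.2) hτ
    simp only [ext_of_mem hr f this, hf]
  rw [this, intervalIntegral.integral_eq_sub_of_hasDerivAt (fun x _ => hX x)
    (hX1.intervalIntegrable _ _), h0, sub_zero]

lemma memL (hr : 0 < r) : -r ∈ Icc (-r) r := ⟨le_rfl, by linarith⟩
lemma memR (hr : 0 < r) : r ∈ Icc (-r) r := ⟨by linarith, le_rfl⟩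

/-- Solution operator of the second order problem with mixed boundary conditions. -/
noncomputable def K : E r →L[ℝ] E r := (J hr r).comp (J hr (-r))

lemma K_apply (u : E r) : K hr u = J hr r (J hr (-r) u) := rfl

lemma K_eq (f : E r) (X X1 X2 : ℝ → ℝ) (hX2 : Continuous X2)
    (hX : ∀ s, HasDerivAt X (X1 s) s) (hX1 : ∀ s, HasDerivAt X1 (X2 s) s)
    (h0 : X r = 0) (h1 : X1 (-r) = 0) (hf : ∀ s : Icc (-r) r, f s = X2 s)
    (s : Icc (-r) r) : K hr f s = X s := by
  refine J_eq hr (memR hr) _ X X1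
    (continuous_iff_continuousAt.2 fun s => (hX1 s).continuousAt) hX h0 ?_ s
  exact J_eq hr (memL hr) _ X1 X2 hX2 hX1 h1 hf

/-- The `L²` pairing. -/
noncomputable def B (f : E r) : E r →L[ℝ] ℝ :=
  (ContinuousMap.evalCLM ℝ (⟨r, memR hr⟩ : Icc (-r) r)).comp
    ((J hr (-r)).comp (ContinuousLinearMap.mul ℝ (E r) f))

lemma B_apply (f g : E r) : B hr f g = ∫ τ in (-r)..r, ext hr f τ * ext hr g τ := rfl

lemma B_comm (f g : E r) : B hr f g = B hr g f := by
  simp [B_apply, mul_comm]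

lemma B_J (f g : E r) : B hr (J hr r f) g = - B hr f (J hr (-r) g) := by
  rw [B_apply, B_apply]
  have key := intervalIntegral.integral_mul_deriv_eq_deriv_mul (a := -r) (b := r)
    (fun x _ => prim_hasDeriv (ext_cont hr f) r x)
    (fun x _ => prim_hasDeriv (ext_cont hr g) (-r) x)
    ((ext_cont hr f).intervalIntegrable _ _) ((ext_cont hr g).intervalIntegrable _ _)
  simp only [intervalIntegral.integral_same, zero_mul, mul_zero, sub_zero, zero_sub] at key
  have hh : ∀ τ ∈ uIcc (-r) r, τ ∈ Icc (-r) r := fun τ h => uIcc_subset_Icc (memL hr) (memR hr) h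
  rw [intervalIntegral.integral_congr (g := fun τ => (∫ t in r..τ, ext hr f t) * ext hr g τ), key,
    intervalIntegral.integral_congr (g := fun τ => ext hr f τ * ext hr (J hr (-r) g) τ)]
  · intro τ hτ
    simp only [ext_of_mem hr (J hr (-r) g) (hh τ hτ), J_apply]
  · intro τ hτ
    simp only [ext_of_mem hr (J hr r f) (hh τ hτ), J_apply]

lemma B_K (f g : E r) : B hr (K hr f) g = B hr f (K hr g) := by
  rw [B_comm hr f, K_apply, K_apply, B_J, B_J, B_comm]

lemma B_self {f : E r} (h : B hr f f = 0) : f = 0 := by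
  rw [B_apply] at h
  ext s
  by_contra hne
  have : 0 < ∫ τ in (-r)..r, ext hr f τ * ext hr f τ := by
    apply intervalIntegral.integral_pos (by linarith)
      (((ext_cont hr f).mul (ext_cont hr f)).continuousOn)
    · intro x _; exact mul_self_nonneg _
    · refine ⟨s, s.2, ?_⟩
      have h2 : ext hr f s = f s := ext_of_mem hr f s.2
      have h3 : ext hr f s ≠ 0 := by rw [h2]; exact hne
      exact mul_self_pos.2 h3
  linarith

/-- `cos (ω (s + r))`. -/
noncomputable def phi (r ω : ℝ) : E r := ⟨fun s => cos (ω * (s + r)), by fun_prop⟩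

lemma phi_apply (ω : ℝ) (s : Icc (-r) r) : phi r ω s = cos (ω * (s + r)) := rfl

lemma dcos (ω s : ℝ) : HasDerivAt (fun s => cos (ω * (s + r))) (-(ω * sin (ω * (s + r)))) s := by
  refine HasDerivAt.congr_deriv (((hasDerivAt_id s).add_const r).const_mul ω).cos ?_
  simp; ring

lemma dsin (ω s : ℝ) : HasDerivAt (fun s => sin (ω * (s + r))) (ω * cos (ω * (s + r))) s := by
  refine HasDerivAt.congr_deriv (((hasDerivAt_id s).add_const r).const_mul ω).sin ?_
  simp; ring

lemma phi_ne (hr : 0 < r) (ω : ℝ) : phi r ω ≠ 0 := by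
  intro h
  have := congrArg (fun f : E r => f ⟨-r, memL hr⟩) h
  simp [phi_apply] at this

lemma solve {ω : ℝ} (hω : 0 < ω) (f : E r)
    (h : cos (ω * (r + r)) ≠ 0 ∨ (cos (ω * (r + r)) = 0 ∧ B hr (phi r ω) f = 0)) :
    ∃ u : E r, u + ω ^ 2 • K hr u = f := by
  set F := ext hr f with hF
  have cF : Continuous F := ext_cont hr f
  set C : ℝ → ℝ := fun s => ∫ τ in (-r)..s, cos (ω * (τ + r)) * F τ with hC
  set S : ℝ → ℝ := fun s => ∫ τ in (-r)..s, sin (ω * (τ + r)) * F τ with hS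
  have dC : ∀ s, HasDerivAt C (cos (ω * (s + r)) * F s) s :=
    fun s => prim_hasDeriv (g := fun τ => cos (ω * (τ + r)) * F τ) (by fun_prop) _ s
  have dS : ∀ s, HasDerivAt S (sin (ω * (s + r)) * F s) s :=
    fun s => prim_hasDeriv (g := fun τ => sin (ω * (τ + r)) * F τ) (by fun_prop) _ s
  have C0 : C (-r) = 0 := by simp [hC]
  have S0 : S (-r) = 0 := by simp [hS]
  obtain ⟨A, hA⟩ : ∃ A : ℝ, (sin (ω * (r + r)) * C r - cos (ω * (r + r)) * S r) / ω
      + A * cos (ω * (r + r)) = 0 := by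
    rcases h with h | ⟨h, h'⟩
    · refine ⟨-((sin (ω * (r + r)) * C r - cos (ω * (r + r)) * S r) / ω) / cos (ω * (r + r)), ?_⟩
      rw [div_mul_cancel₀ _ h]
      ring
    · refine ⟨0, ?_⟩
      have : C r = 0 := by
        rw [← h', B_apply]
        apply intervalIntegral.integral_congr
        intro τ hτ
        have : τ ∈ Icc (-r) r := uIcc_subset_Icc (memL hr) (memR hr) hτ
        simp only [ext_of_mem hr (phi r ω) this, phi_apply, hF]
      rw [h, this]; simp
  set X : ℝ → ℝ := fun s => (sin (ω * (s + r)) * C s - cos (ω * (s + r)) * S s) / ω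
      + A * cos (ω * (s + r)) with hX
  set X1 : ℝ → ℝ := fun s => cos (ω * (s + r)) * C s + sin (ω * (s + r)) * S s
      - A * ω * sin (ω * (s + r)) with hX1
  have dX : ∀ s, HasDerivAt X (X1 s) s := by
    intro s
    refine HasDerivAt.congr_deriv ((((dsin ω s).mul (dC s)).sub
      ((dcos ω s).mul (dS s))).div_const ω |>.add ((dcos ω s).const_mul A)) ?_
    simp only [hX1]
    field_simp
    ring
  have dX1 : ∀ s, HasDerivAt X1 (F s - ω ^ 2 * X s) s := by
    intro s
    refine HasDerivAt.congr_deriv ((((dcos ω s).mul (dC s)).add ((dsin ω s).mul (dS s))).sub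
      ((dsin ω s).const_mul (A * ω))) ?_
    simp only [hX]
    field_simp
    linear_combination (F s) * (sin_sq_add_cos_sq (ω * (s + r)))
  have cX : Continuous X := continuous_iff_continuousAt.2 fun s => (dX s).continuousAt
  refine ⟨⟨fun s => F s - ω ^ 2 * X s, by fun_prop⟩, ?_⟩
  ext s
  rw [ContinuousMap.add_apply, ContinuousMap.smul_apply,
    K_eq hr _ X X1 (fun s => F s - ω ^ 2 * X s) (by fun_prop) dX dX1 hA
      (by simp [hX1, C0, S0]) (fun _ => rfl)]
  simp [hF, ext_of_mem hr f s.2]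

lemma K_phi {ω : ℝ} (hω : 0 < ω) (hc : cos (ω * (r + r)) = 0) :
    phi r ω + ω ^ 2 • K hr (phi r ω) = 0 := by
  ext s
  rw [ContinuousMap.add_apply, ContinuousMap.smul_apply,
    K_eq hr _ (fun s => - (ω ^ 2)⁻¹ * cos (ω * (s + r))) (fun s => ω⁻¹ * sin (ω * (s + r)))
      (fun s => cos (ω * (s + r))) (by fun_prop) ?_ ?_ (by simp [hc]) (by simp) (fun _ => rfl)]
  · simp only [phi_apply, smul_eq_mul, ContinuousMap.zero_apply]
    field_simp; ring
  · intro s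
    refine HasDerivAt.congr_deriv ((dcos ω s).const_mul (- (ω ^ 2)⁻¹)) ?_
    field_simp
  · intro s
    refine HasDerivAt.congr_deriv ((dsin ω s).const_mul (ω⁻¹)) ?_
    field_simp


lemma B_phi_K {ω : ℝ} (hω : 0 < ω) (hc : cos (ω * (r + r)) = 0) (v : E r) :
    B hr (phi r ω) v + ω ^ 2 * B hr (phi r ω) (K hr v) = 0 := by
  have h := congrArg (fun f => B hr v f) (K_phi hr hω hc)
  simp only [map_add, map_smul, map_zero, smul_eq_mul] at h
  rw [B_comm hr (phi r ω) v, ← B_K, B_comm hr _ v]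
  exact h

lemma solveV {ω₁ ω : ℝ} (h1 : 0 < ω₁) (hc : cos (ω₁ * (r + r)) = 0) (hω : 0 < ω)
    (h : cos (ω * (r + r)) ≠ 0 ∨ ω = ω₁) (f : E r) (hf : B hr (phi r ω₁) f = 0) :
    ∃ u : E r, B hr (phi r ω₁) u = 0 ∧ u + ω ^ 2 • K hr u = f := by
  by_cases hh : ω = ω₁
  · subst hh
    obtain ⟨u, hu⟩ := solve hr hω f (Or.inr ⟨hc, hf⟩)
    have hne : B hr (phi r ω) (phi r ω) ≠ 0 := fun h0 => phi_ne hr ω (B_self hr h0)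
    refine ⟨u - (B hr (phi r ω) u / B hr (phi r ω) (phi r ω)) • phi r ω, ?_, ?_⟩
    · simp only [map_sub, map_smul, smul_eq_mul]
      field_simp
      ring
    · have h3 := K_phi hr hω hc
      rw [map_sub, map_smul, ← hu]
      have : ω ^ 2 • K hr (phi r ω) = - phi r ω := by
        rw [eq_neg_iff_add_eq_zero, add_comm]; exact h3
      rw [smul_sub, smul_comm, this]
      module
  · have h' : cos (ω * (r + r)) ≠ 0 := by tauto
    obtain ⟨u, hu⟩ := solve hr hω f (Or.inl h')
    refine ⟨u, ?_, hu⟩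
    have e1 := congrArg (fun g => B hr (phi r ω₁) g) hu
    simp only [map_add, map_smul, smul_eq_mul, hf] at e1
    have e2 := B_phi_K hr h1 hc u
    have e3 : (ω₁ ^ 2 - ω ^ 2) * B hr (phi r ω₁) u = 0 := by
      linear_combination ω₁ ^ 2 * e1 - ω ^ 2 * e2
    rcases mul_eq_zero.1 e3 with h | h
    · exfalso
      apply hh
      have : ω₁ ^ 2 = ω ^ 2 := by linarith
      exact ((pow_left_inj₀ h1.le hω.le two_ne_zero).1 this).symm
    · exact h

lemma injV {ω₁ ω : ℝ} (h1 : 0 < ω₁) (hc : cos (ω₁ * (r + r)) = 0) (hω : 0 < ω)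
    (h : cos (ω * (r + r)) ≠ 0 ∨ ω = ω₁) (v : E r) (hf : B hr (phi r ω₁) v = 0)
    (hv : v + ω ^ 2 • K hr v = 0) : v = 0 := by
  obtain ⟨w, -, hw⟩ := solveV hr h1 hc hω h v hf
  apply B_self hr
  have e := congrArg (fun g => B hr w g) hv
  have e2 := congrArg (fun g => B hr v g) hw
  simp only [map_add, map_smul, smul_eq_mul, map_zero] at e e2
  rw [← e2, ← B_K, B_comm hr v w, B_comm hr (K hr v) w]
  exact e

/-- Linear part. -/
noncomputable def Lin (α β : ℝ) : E r →L[ℝ] E r :=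
  ContinuousLinearMap.id ℝ (E r) + α • K hr + β • (K hr).comp (K hr)

lemma Lin_apply (α β : ℝ) (v : E r) :
    Lin hr α β v = v + α • K hr v + β • K hr (K hr v) := rfl

lemma Lin_factor (a b : ℝ) (v : E r) :
    Lin hr (a + b) (a * b) v = (v + a • K hr v) + b • K hr (v + a • K hr v) := by
  rw [Lin_apply, map_add, map_smul]
  module

/-- The derivative in `(α, v)` at the bifurcation point. -/
noncomputable def D (ω₁ α β : ℝ) : ℝ × E r →L[ℝ] E r × ℝ :=
  ((ContinuousLinearMap.fst ℝ ℝ (E r)).smulRight (K hr (phi r ω₁)) +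
    (Lin hr α β).comp (ContinuousLinearMap.snd ℝ ℝ (E r))).prod
  ((B hr (phi r ω₁)).comp (ContinuousLinearMap.snd ℝ ℝ (E r)))

lemma D_apply (ω₁ α β : ℝ) (a : ℝ) (v : E r) :
    D hr ω₁ α β (a, v) = (a • K hr (phi r ω₁) + Lin hr α β v, B hr (phi r ω₁) v) := rfl

lemma B_Lin {ω₁ b : ℝ} (h1 : 0 < ω₁) (hc : cos (ω₁ * (r + r)) = 0) (v : E r) :
    B hr (phi r ω₁) (Lin hr (ω₁ ^ 2 + b) (ω₁ ^ 2 * b) v) = 0 := by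
  rw [Lin_apply]
  have e1 := B_phi_K hr h1 hc v
  have e2 := B_phi_K hr h1 hc (K hr v)
  simp only [map_add, map_smul, smul_eq_mul]
  linear_combination e1 + b * e2

lemma Lin_phi {ω₁ b : ℝ} (h1 : 0 < ω₁) (hc : cos (ω₁ * (r + r)) = 0) :
    Lin hr (ω₁ ^ 2 + b) (ω₁ ^ 2 * b) (phi r ω₁) = 0 := by
  rw [Lin_factor, K_phi hr h1 hc]
  simp

lemma D_inv {ω₁ ω₂ : ℝ} (h1 : 0 < ω₁) (hc : cos (ω₁ * (r + r)) = 0) (h2 : 0 < ω₂)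
    (h : cos (ω₂ * (r + r)) ≠ 0 ∨ ω₂ = ω₁) :
    (D hr ω₁ (ω₁ ^ 2 + ω₂ ^ 2) (ω₁ ^ 2 * ω₂ ^ 2)).IsInvertible := by
  have hne : B hr (phi r ω₁) (phi r ω₁) ≠ 0 := fun h0 => phi_ne hr ω₁ (B_self hr h0)
  have hKne : B hr (phi r ω₁) (K hr (phi r ω₁)) ≠ 0 := by
    intro h0
    have := B_phi_K hr h1 hc (phi r ω₁)
    rw [h0] at this
    apply hne; linarith
  have hinj : (D hr ω₁ (ω₁ ^ 2 + ω₂ ^ 2) (ω₁ ^ 2 * ω₂ ^ 2)).ker = ⊥ := by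
    rw [LinearMap.ker_eq_bot']
    rintro ⟨a, v⟩ hav
    have hav' : D hr ω₁ (ω₁ ^ 2 + ω₂ ^ 2) (ω₁ ^ 2 * ω₂ ^ 2) (a, v) = 0 := hav
    rw [D_apply, Prod.mk_eq_zero] at hav'
    obtain ⟨e1, e2⟩ := hav'
    have e3 := congrArg (fun g => B hr (phi r ω₁) g) e1
    simp only [map_add, map_smul, smul_eq_mul, map_zero, B_Lin hr h1 hc, add_zero] at e3
    have ha : a = 0 := (mul_eq_zero.1 e3).resolve_right hKne
    subst ha
    rw [zero_smul, zero_add, Lin_factor] at e1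
    have e5 : B hr (phi r ω₁) (v + ω₁ ^ 2 • K hr v) = 0 := by
      simp only [map_add, map_smul, smul_eq_mul]
      exact B_phi_K hr h1 hc v
    have e4 := injV hr h1 hc h2 h _ e5 e1
    have := injV hr h1 hc h1 (Or.inr rfl) v e2 e4
    rw [this]; rfl
  have hsurj : (D hr ω₁ (ω₁ ^ 2 + ω₂ ^ 2) (ω₁ ^ 2 * ω₂ ^ 2)).range = ⊤ := by
    rw [LinearMap.range_eq_top]
    rintro ⟨f, b⟩
    set a := B hr (phi r ω₁) f / B hr (phi r ω₁) (K hr (phi r ω₁)) with ha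
    have e0 : B hr (phi r ω₁) (f - a • K hr (phi r ω₁)) = 0 := by
      simp only [map_sub, map_smul, smul_eq_mul, ha]
      field_simp
      ring
    obtain ⟨w, hw0, hw⟩ := solveV hr h1 hc h2 h _ e0
    obtain ⟨v, hv0, hv⟩ := solveV hr h1 hc h1 (Or.inr rfl) w hw0
    refine ⟨(a, v + (b / B hr (phi r ω₁) (phi r ω₁)) • phi r ω₁), ?_⟩
    refine (D_apply hr _ _ _ _ _).trans ?_
    rw [map_add, map_smul, Lin_phi hr h1 hc, Lin_factor, hv, hw, Prod.mk.injEq]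
    constructor
    · simp
    · simp only [map_add, map_smul, smul_eq_mul, hv0]
      field_simp
      ring
  exact ⟨ContinuousLinearEquiv.ofBijective _ hinj hsurj, rfl⟩

/-- Cubic part. -/
noncomputable def N (γ α : ℝ) (w : E r) : E r :=
  γ • (K hr (K hr w)) ^ 3 + (3 : ℝ) • (K hr w) ^ 3
    + (12 : ℝ) • (J hr (-r) (K hr w) * K hr w * J hr (-r) w)
    + (3 : ℝ) • ((J hr (-r) (K hr w)) ^ 2 * (w - (α / 2) • K hr w))

lemma N_hom (γ α t : ℝ) (w : E r) : N hr γ α (t • w) = t ^ 3 • N hr γ α w := by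
  ext s
  simp [N]
  ring

/-- The rescaled bifurcation map. -/
noncomputable def Phi (ω β γ : ℝ) (q : ℝ × (ℝ × E r)) : E r × ℝ :=
  (Lin hr q.2.1 β (phi r ω + q.2.2) - q.1 ^ 2 • N hr γ q.2.1 (phi r ω + q.2.2),
    B hr (phi r ω) q.2.2)

lemma Phi_contDiff (ω β γ : ℝ) : ContDiff ℝ 1 (Phi hr ω β γ) := by
  unfold Phi N
  simp only [Lin_apply]
  fun_prop

lemma Phi_deriv (ω α β γ : ℝ) :
    (fderiv ℝ (Phi hr ω β γ) (0, (α, 0))) ∘L .inr ℝ ℝ (ℝ × E r) = D hr ω α β := by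
  have h1 : HasFDerivAt (Phi hr ω β γ) (fderiv ℝ (Phi hr ω β γ) (0, (α, 0))) (0, (α, 0)) :=
    ((Phi_contDiff hr ω β γ).differentiable one_ne_zero _).hasFDerivAt
  have h2 := HasFDerivAt.comp (α, (0 : E r)) h1 (hasFDerivAt_prodMk_right (0 : ℝ) (α, (0 : E r)))
  refine h2.unique ?_
  have hs : HasFDerivAt (fun p : ℝ × E r => p.2) (ContinuousLinearMap.snd ℝ ℝ (E r)) (α, 0) :=
    hasFDerivAt_snd
  have hf : HasFDerivAt (fun p : ℝ × E r => p.1) (ContinuousLinearMap.fst ℝ ℝ (E r)) (α, 0) :=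
    hasFDerivAt_fst
  have hw := hs.const_add (phi r ω)
  have hK := (K hr).hasFDerivAt.comp (α, (0 : E r)) hw
  have hKK := (K hr).hasFDerivAt.comp (α, (0 : E r)) hK
  have h3 := (((hw.add (hf.smul hK)).add (hKK.const_smul β)).prodMk
    ((B hr (phi r ω)).hasFDerivAt.comp (α, (0 : E r)) hs))
  have e : (Phi hr ω β γ ∘ fun p => ((0 : ℝ), p)) = fun p : ℝ × E r =>
    ((phi r ω + p.2) + p.1 • K hr (phi r ω + p.2) + β • K hr (K hr (phi r ω + p.2)),
      B hr (phi r ω) p.2) := by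
    funext p
    simp [Phi, Lin_apply]
  rw [e]
  refine HasFDerivAt.congr_fderiv h3 ?_
  apply ContinuousLinearMap.ext
  rintro ⟨a, v⟩
  rw [D_apply, Lin_apply]
  refine Prod.ext ?_ rfl
  simp
  module

open Filter Topology in
lemma bifurcation {ω₁ ω₂ : ℝ} (h1 : 0 < ω₁) (hc : cos (ω₁ * (r + r)) = 0) (h2 : 0 < ω₂)
    (h : cos (ω₂ * (r + r)) ≠ 0 ∨ ω₂ = ω₁) (γ α₀ β : ℝ) (hα : 0 < α₀)
    (hα₀ : α₀ = ω₁ ^ 2 + ω₂ ^ 2) (hβ : β = ω₁ ^ 2 * ω₂ ^ 2) (ε : ℝ) (hε : 0 < ε) :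
    ∃ α : ℝ, ∃ u : E r, 0 < α ∧ |α - α₀| < ε ∧ B hr (phi r ω₁) u ≠ 0 ∧
      Lin hr α β u = N hr γ α u ∧ ‖u‖ < ε ∧ ‖J hr (-r) u‖ < ε ∧ ‖K hr u‖ < ε ∧
      ‖J hr (-r) (K hr u)‖ < ε ∧ ‖K hr (K hr u)‖ < ε := by
  have hne : B hr (phi r ω₁) (phi r ω₁) ≠ 0 := fun h0 => phi_ne hr ω₁ (B_self hr h0)
  have hst : HasStrictFDerivAt (Phi hr ω₁ β γ) (fderiv ℝ (Phi hr ω₁ β γ) (0, (α₀, 0)))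
      (0, (α₀, 0)) := (Phi_contDiff hr ω₁ β γ).contDiffAt.hasStrictFDerivAt one_ne_zero
  have hinv : (fderiv ℝ (Phi hr ω₁ β γ) (0, (α₀, 0)) ∘L .inr ℝ ℝ (ℝ × E r)).IsInvertible := by
    rw [Phi_deriv, hα₀, hβ]
    exact D_inv hr h1 hc h2 h
  have hP0 : Phi hr ω₁ β γ (0, (α₀, 0)) = 0 := by
    simp [Phi, hα₀, hβ, Lin_phi hr h1 hc]
  have ev := hst.eventually_apply_implicitFunctionOfProdDomain hinv
  have td := hst.tendsto_implicitFunctionOfProdDomain hinv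
  set ψ := hst.implicitFunctionOfProdDomain hinv
  rw [hP0] at ev
  simp only at ev td
  have td1 : Tendsto (fun t => (ψ t).1) (𝓝 0) (𝓝 α₀) := (continuous_fst.tendsto _).comp td
  have td2 : Tendsto (fun t => (ψ t).2) (𝓝 0) (𝓝 0) := (continuous_snd.tendsto _).comp td
  have td3 : Tendsto (fun t : ℝ => t • (phi r ω₁ + (ψ t).2)) (𝓝 0) (𝓝 0) := by
    have := (tendsto_id (x := 𝓝 (0 : ℝ))).smul (td2.const_add (phi r ω₁))
    simpa using this
  have tdT : ∀ T : E r →L[ℝ] E r,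
      ∀ᶠ t : ℝ in 𝓝 0, ‖T (t • (phi r ω₁ + (ψ t).2))‖ < ε := by
    intro T
    have h5 := ((T.continuous.tendsto 0).comp td3).norm
    rw [map_zero, norm_zero] at h5
    exact h5.eventually (gt_mem_nhds hε)
  have ev1 : ∀ᶠ t : ℝ in 𝓝 0, 0 < (ψ t).1 := td1.eventually (lt_mem_nhds hα)
  have ev2 : ∀ᶠ t : ℝ in 𝓝 0, |(ψ t).1 - α₀| < ε := by
    have := td1.eventually (Metric.ball_mem_nhds α₀ hε)
    simpa [Real.dist_eq] using this
  have all := ev.and (ev1.and (ev2.and ((tdT (.id ℝ (E r))).and ((tdT (J hr (-r))).and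
    ((tdT (K hr)).and ((tdT ((J hr (-r)).comp (K hr))).and (tdT ((K hr).comp (K hr)))))))))
  have all' := (all.filter_mono (nhdsWithin_le_nhds (s := {0}ᶜ))).and self_mem_nhdsWithin
  obtain ⟨t, ⟨hP, hpos, hαε, n4, n3, n2, n1, n0⟩, ht⟩ := all'.exists
  have ht : t ≠ 0 := ht
  rw [Phi, Prod.mk_eq_zero] at hP
  obtain ⟨hP1, hP2⟩ := hP
  simp only at hP1 hP2
  refine ⟨(ψ t).1, t • (phi r ω₁ + (ψ t).2), hpos, hαε, ?_, ?_, n4, n3, n2, n1, n0⟩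
  · rw [map_smul, map_add, hP2, add_zero, smul_eq_mul]
    exact mul_ne_zero ht hne
  · rw [N_hom, map_smul, sub_eq_zero.1 hP1, smul_smul]
    congr 1
    ring


lemma ext_J_prim {p : ℝ} (hp : p ∈ Icc (-r) r) (f : E r) (X1 : ℝ → ℝ) (hX1 : Continuous X1)
    (hf : ∀ s : Icc (-r) r, f s = X1 s) (s : Icc (-r) r) :
    J hr p f s = ∫ τ in p..(s : ℝ), X1 τ :=
  J_eq hr hp f (fun s => ∫ τ in p..s, X1 τ) X1 hX1 (fun s => prim_hasDeriv hX1 p s) (by simp) hf s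

lemma realize (u : E r) : ∃ x : ℝ → ℝ, ContDiff ℝ 4 x ∧
    iteratedDeriv 1 x (-r) = 0 ∧ iteratedDeriv 3 x (-r) = 0 ∧
    x r = 0 ∧ iteratedDeriv 2 x r = 0 ∧
    (∀ s : Icc (-r) r, x s = K hr (K hr u) s) ∧
    (∀ s : Icc (-r) r, iteratedDeriv 1 x s = J hr (-r) (K hr u) s) ∧
    (∀ s : Icc (-r) r, iteratedDeriv 2 x s = K hr u s) ∧
    (∀ s : Icc (-r) r, iteratedDeriv 3 x s = J hr (-r) u s) ∧
    (∀ s : Icc (-r) r, iteratedDeriv 4 x s = u s) := by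
  set x4 := ext hr u with h4
  have c4 : Continuous x4 := ext_cont hr u
  set x3 : ℝ → ℝ := fun s => ∫ τ in (-r)..s, x4 τ with h3
  have c3 : Continuous x3 := prim_cont c4 _
  set x2 : ℝ → ℝ := fun s => ∫ τ in r..s, x3 τ with h2
  have c2 : Continuous x2 := prim_cont c3 _
  set x1 : ℝ → ℝ := fun s => ∫ τ in (-r)..s, x2 τ with h1
  have c1 : Continuous x1 := prim_cont c2 _
  set x0 : ℝ → ℝ := fun s => ∫ τ in r..s, x1 τ with h0
  have c0 : Continuous x0 := prim_cont c1 _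
  have i0 : iteratedDeriv 0 x0 = x0 := iteratedDeriv_zero
  have i1 : iteratedDeriv 1 x0 = x1 := by
    rw [iteratedDeriv_succ, i0]; exact funext fun s => (prim_hasDeriv c1 _ s).deriv
  have i2 : iteratedDeriv 2 x0 = x2 := by
    rw [iteratedDeriv_succ, i1]; exact funext fun s => (prim_hasDeriv c2 _ s).deriv
  have i3 : iteratedDeriv 3 x0 = x3 := by
    rw [iteratedDeriv_succ, i2]; exact funext fun s => (prim_hasDeriv c3 _ s).deriv
  have i4 : iteratedDeriv 4 x0 = x4 := by
    rw [iteratedDeriv_succ, i3]; exact funext fun s => (prim_hasDeriv c4 _ s).deriv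
  have e4 : ∀ s : Icc (-r) r, u s = x4 s := fun s => (ext_of_mem hr u s.2).symm
  have e3 := ext_J_prim hr (memL hr) u x4 c4 e4
  have e2 := ext_J_prim hr (memR hr) _ x3 c3 e3
  have e1 := ext_J_prim hr (memL hr) _ x2 c2 e2
  have e0 := ext_J_prim hr (memR hr) _ x1 c1 e1
  refine ⟨x0, ?_, ?_⟩
  · have : ContDiff ℝ ((4 : ℕ) : WithTop ℕ∞) x0 := by
      rw [contDiff_nat_iff_iteratedDeriv]
      constructor
      · intro k hk
        interval_cases k
        · rwa [i0]
        · rwa [i1]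
        · rwa [i2]
        · rwa [i3]
        · rwa [i4]
      · intro k hk
        interval_cases k
        · rw [i0]; exact fun s => (prim_hasDeriv c1 _ s).differentiableAt
        · rw [i1]; exact fun s => (prim_hasDeriv c2 _ s).differentiableAt
        · rw [i2]; exact fun s => (prim_hasDeriv c3 _ s).differentiableAt
        · rw [i3]; exact fun s => (prim_hasDeriv c4 _ s).differentiableAt
    exact_mod_cast this
  · rw [i1, i2, i3, i4]
    refine ⟨by simp [h1], by simp [h3], by simp [h0], by simp [h2], ?_, ?_, ?_, ?_, ?_⟩
    · exact fun s => (e0 s).symm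
    · exact fun s => (e1 s).symm
    · exact fun s => (e2 s).symm
    · exact fun s => (e3 s).symm
    · exact fun s => (e4 s).symm

end
end Rod

/-- At a simple point, bifurcation occurs with respect to the compressive-force
parameter `α` alone, with `β` and `γ` fixed. -/
theorem stmt_15 (r : ℝ) (hr : 0 < r)
    (c : ℕ → ℝ)
    (hc : ∀ k : ℕ, c k = -(π / r) ^ 2 * ((2 * (k : ℝ) - 1) / 4) ^ 2)
    (m : ℕ) (hm : 1 ≤ m)
    (α₀ β₀ γ₀ : ℝ) (hα₀ : 0 < α₀) (hβ₀ : 0 < β₀) (hγ₀ : 0 < γ₀)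
    (hray : β₀ = -(c m) * α₀ - (c m) ^ 2)
    (hsimple : ∀ k : ℕ, 1 ≤ k → k ≠ m → β₀ ≠ -(c k) * α₀ - (c k) ^ 2) :
    ∀ ε > 0, ∃ α : ℝ, ∃ x : ℝ → ℝ,
      0 < α ∧ |α - α₀| < ε ∧
      ContDiff ℝ 4 x ∧
      (∃ s ∈ Icc (-r) r, x s ≠ 0) ∧
      iteratedDeriv 1 x (-r) = 0 ∧ iteratedDeriv 3 x (-r) = 0 ∧
      x r = 0 ∧ iteratedDeriv 2 x r = 0 ∧
      (∀ s ∈ Icc (-r) r,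
        iteratedDeriv 4 x s + α * iteratedDeriv 2 x s + β₀ * x s
          - γ₀ * (x s) ^ 3 - 3 * (iteratedDeriv 2 x s) ^ 3
          - 12 * iteratedDeriv 1 x s * iteratedDeriv 2 x s * iteratedDeriv 3 x s
          - 3 * (iteratedDeriv 1 x s) ^ 2 *
              (iteratedDeriv 4 x s - (α / 2) * iteratedDeriv 2 x s) = 0) ∧
      (∀ k : ℕ, k ≤ 4 → ∀ s ∈ Icc (-r) r, |iteratedDeriv k x s| < ε) := by
  intro ε hε
  have hm' : (1 : ℝ) ≤ m := by exact_mod_cast hm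
  set ω₁ : ℝ := (π / r) * ((2 * (m : ℝ) - 1) / 4) with hω₁
  have h1 : 0 < ω₁ := by
    have : 0 < (2 * (m : ℝ) - 1) / 4 := by linarith
    have := pi_pos
    positivity
  have hcm : c m = -ω₁ ^ 2 := by rw [hc, hω₁]; ring
  have hcos : cos (ω₁ * (r + r)) = 0 := by
    rw [cos_eq_zero_iff]
    refine ⟨(m : ℤ) - 1, ?_⟩
    rw [hω₁]
    push_cast
    field_simp
    ring
  have hpos : 0 < α₀ - ω₁ ^ 2 := by
    have : 0 < ω₁ ^ 2 * (α₀ - ω₁ ^ 2) := by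
      rw [hcm] at hray
      nlinarith
    exact (mul_pos_iff_of_pos_left (by positivity)).1 this
  set ω₂ : ℝ := √(α₀ - ω₁ ^ 2) with hω₂
  have h2 : 0 < ω₂ := Real.sqrt_pos.2 hpos
  have hsq : ω₂ ^ 2 = α₀ - ω₁ ^ 2 := Real.sq_sqrt hpos.le
  have hα : α₀ = ω₁ ^ 2 + ω₂ ^ 2 := by linarith
  have hβ : β₀ = ω₁ ^ 2 * ω₂ ^ 2 := by rw [hray, hcm, hsq]; ring
  have hh : cos (ω₂ * (r + r)) ≠ 0 ∨ ω₂ = ω₁ := by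
    by_contra hcon
    push Not at hcon
    obtain ⟨hz, hne⟩ := hcon
    obtain ⟨k, hk⟩ := cos_eq_zero_iff.1 hz
    have hk0 : 0 ≤ k := by
      by_contra hneg
      have : k ≤ -1 := by omega
      have hkr : (k : ℝ) ≤ -1 := by exact_mod_cast this
      have l : 0 < ω₂ * (r + r) := by positivity
      have := pi_pos
      nlinarith
    obtain ⟨n, rfl⟩ := Int.eq_ofNat_of_zero_le hk0
    have hw : ω₂ = (π / r) * ((2 * ((n + 1 : ℕ) : ℝ) - 1) / 4) := by
      push_cast at hk ⊢
      field_simp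
      linarith
    have hcn : c (n + 1) = -ω₂ ^ 2 := by rw [hc, hw]; ring
    refine hsimple (n + 1) (by omega) ?_ ?_
    · intro hnm
      apply hne
      rw [hw, hω₁, hnm]
    · rw [hcn, hβ, hα]; ring
  obtain ⟨α, u, hαp, hαε, hB, heq, n4, n3, n2, n1, n0⟩ :=
    Rod.bifurcation hr h1 hcos h2 hh γ₀ α₀ β₀ hα₀ hα hβ ε hε
  obtain ⟨x, hx, b1, b3, b0, b2, e0, e1, e2, e3, e4⟩ := Rod.realize hr u
  refine ⟨α, x, hαp, hαε, hx, ?_, b1, b3, b0, b2, ?_, ?_⟩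
  · by_contra hcon
    push Not at hcon
    have hz : Rod.K hr (Rod.K hr u) = 0 := by
      ext s
      rw [← e0 s]
      exact hcon s s.2
    have q1 := Rod.B_phi_K hr h1 hcos u
    have q2 := Rod.B_phi_K hr h1 hcos (Rod.K hr u)
    rw [hz, map_zero, mul_zero, add_zero] at q2
    rw [q2, mul_zero, add_zero] at q1
    exact hB q1
  · intro s hs
    have hp := congrArg (fun f : Rod.E r => f ⟨s, hs⟩) heq
    have f0 := e0 ⟨s, hs⟩
    have f1 := e1 ⟨s, hs⟩
    have f2 := e2 ⟨s, hs⟩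
    have f3 := e3 ⟨s, hs⟩
    have f4 := e4 ⟨s, hs⟩
    simp only at f0 f1 f2 f3 f4
    simp only [Rod.Lin_apply, Rod.N, ContinuousMap.add_apply, ContinuousMap.smul_apply,
      ContinuousMap.mul_apply, ContinuousMap.pow_apply, ContinuousMap.sub_apply,
      smul_eq_mul] at hp
    rw [f0, f1, f2, f3, f4]
    linear_combination hp
  · intro k hk s hs
    have bd : ∀ f : Rod.E r, ‖f‖ < ε → |f ⟨s, hs⟩| < ε := fun f hf =>
      lt_of_le_of_lt (f.norm_coe_le_norm ⟨s, hs⟩) hf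
    interval_cases k
    · rw [iteratedDeriv_zero, e0 ⟨s, hs⟩]; exact bd _ n0
    · rw [e1 ⟨s, hs⟩]; exact bd _ n1
    · rw [e2 ⟨s, hs⟩]; exact bd _ n2
    · rw [e3 ⟨s, hs⟩]; exact bd _ n3
    · rw [e4 ⟨s, hs⟩]; exact bd _ n4
end
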